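/- arXiv:2306.15257 — 5 statements merged into one kernel-verified Lean document; each statement's English description precedes it below -/
import Mathlib

section
/- Let (Ω, 𝒜, μ) be a measure space, E a real normed vector space, and Φ : [0,∞) → [0,∞) a Young function (Φ is convex, nondecreasing, continuous, Φ(0) = 0, and Φ(t) > 0 for t > 0) satisfying the Δ₂-condition: there is a constant c > 0 with Φ(2t) ≤ c·Φ(t) for all t ≥ 0. Suppose (u_n) is a sequence of strongly measurable functions u_n : Ω → E and u : Ω → E is strongly measurable, such that u_n(x) → u(x) for μ-almost every x ∈ Ω, ∫_Ω Φ(‖u‖) dμ < ∞, and ∫_Ω Φ(‖u_n‖) dμ → ∫_Ω Φ(‖u‖) dμ as n → ∞. Then ∫_Ω Φ(‖u_n − u‖) dμ → 0 as n → ∞. -/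
open MeasureTheory Filter Topology ENNReal

/-- Along sequences in `ℝ≥0∞` with `a n + b n → l < ∞` and `l ≤ liminf b`, one has `a n → 0`. -/
theorem ENNReal.tendsto_zero_of_tendsto_add_of_le_liminf {ι : Type*} {F : Filter ι}
    {a b : ι → ℝ≥0∞} {l : ℝ≥0∞} (hl : l ≠ ∞) (hab : Tendsto (fun i => a i + b i) F (𝓝 l))
    (hb : l ≤ liminf b F) : Tendsto a F (𝓝 0) := by
  rw [ENNReal.tendsto_nhds_zero]
  intro ε hε
  rcases eq_or_ne l 0 with rfl | hl0
  · filter_upwards [ENNReal.tendsto_nhds_zero.1 hab ε hε] with i hi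
    exact le_self_add.trans hi
  have hε2 : ε / 2 ≠ 0 := (ENNReal.half_pos hε.ne').ne'
  filter_upwards [eventually_lt_of_lt_liminf ((ENNReal.sub_lt_self hl hl0 hε2).trans_le hb),
    hab.eventually_lt_const (ENNReal.lt_add_right hl hε2)] with i hbi habi
  have hbi_ne_top : b i ≠ ∞ := ne_top_of_lt (le_add_self.trans_lt habi)
  have hl_le : l ≤ b i + ε / 2 := tsub_le_iff_right.1 hbi.le
  refine (ENNReal.add_le_add_iff_right hbi_ne_top).1 ?_
  calc a i + b i ≤ l + ε / 2 := habi.le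
    _ ≤ b i + ε / 2 + ε / 2 := by gcongr
    _ = ε + b i := by rw [add_assoc, ENNReal.add_halves, add_comm]

/-- **Generalized dominated convergence** to zero: the dominating functions may vary with `n`, as
long as they converge almost everywhere and their integrals converge to the integral of the
limit. -/
theorem tendsto_lintegral_zero_of_le_of_tendsto_lintegral {α : Type*} [MeasurableSpace α]
    {μ : Measure α} {f g : ℕ → α → ℝ≥0∞} {G : α → ℝ≥0∞}
    (hf : ∀ n, Measurable (f n)) (hg : ∀ n, Measurable (g n)) (hfg : ∀ n x, f n x ≤ g n x)
    (hG : ∫⁻ x, G x ∂μ ≠ ∞)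
    (hf_lim : ∀ᵐ x ∂μ, Tendsto (fun n => f n x) atTop (𝓝 0))
    (hg_lim : ∀ᵐ x ∂μ, Tendsto (fun n => g n x) atTop (𝓝 (G x)))
    (hg_int : Tendsto (fun n => ∫⁻ x, g n x ∂μ) atTop (𝓝 (∫⁻ x, G x ∂μ))) :
    Tendsto (fun n => ∫⁻ x, f n x ∂μ) atTop (𝓝 0) := by
  refine ENNReal.tendsto_zero_of_tendsto_add_of_le_liminf
    (b := fun n => ∫⁻ x, (g n x - f n x) ∂μ) hG ?_ ?_
  · convert hg_int using 2 with n
    rw [← lintegral_add_left (hf n)]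
    exact lintegral_congr fun x => add_tsub_cancel_of_le (hfg n x)
  · refine le_trans (lintegral_mono_ae ?_)
      (lintegral_liminf_le fun n => (hg n).sub (hf n))
    filter_upwards [hf_lim, hg_lim] with x hfx hgx
    have h := ENNReal.Tendsto.sub hgx hfx (.inr ENNReal.zero_ne_top)
    rw [tsub_zero] at h
    exact h.liminf_eq.ge

/-- A nonnegative nondecreasing function with the Δ₂-condition is quasi-subadditive along norms. -/
theorem apply_norm_sub_le_mul_add {E : Type*} [SeminormedAddCommGroup E] {Φ : ℝ → ℝ} {c : ℝ}
    (hΦ_mono : MonotoneOn Φ (Set.Ici 0)) (hΦ_nonneg : ∀ t, 0 ≤ t → 0 ≤ Φ t) (hc : 0 ≤ c)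
    (hΔ : ∀ t, 0 ≤ t → Φ (2 * t) ≤ c * Φ t) (v w : E) :
    Φ ‖v - w‖ ≤ c * (Φ ‖v‖ + Φ ‖w‖) := by
  have hm : 0 ≤ max ‖v‖ ‖w‖ := (norm_nonneg v).trans (le_max_left _ _)
  have hle : ‖v - w‖ ≤ 2 * max ‖v‖ ‖w‖ := by
    linarith [norm_sub_le v w, le_max_left ‖v‖ ‖w‖, le_max_right ‖v‖ ‖w‖]
  have hv := hΦ_nonneg _ (norm_nonneg v)
  have hw := hΦ_nonneg _ (norm_nonneg w)
  calc Φ ‖v - w‖ ≤ Φ (2 * max ‖v‖ ‖w‖) :=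
        hΦ_mono (norm_nonneg _) (mul_nonneg zero_le_two hm) hle
    _ ≤ c * Φ (max ‖v‖ ‖w‖) := hΔ _ hm
    _ ≤ c * (Φ ‖v‖ + Φ ‖w‖) := by
        gcongr
        rcases max_choice ‖v‖ ‖w‖ with h | h <;> rw [h] <;> linarith

/-- Riesz-type convergence lemma for Young functions satisfying the Δ₂-condition
(measure-theoretic content of Lemma 2.6 of the paper). -/
theorem stmt0 {Ω : Type*} [MeasurableSpace Ω] (μ : Measure Ω)
    {E : Type*} [NormedAddCommGroup E] [NormedSpace ℝ E]
    (Φ : ℝ → ℝ)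
    (hΦ_conv : ConvexOn ℝ (Set.Ici (0 : ℝ)) Φ)
    (hΦ_mono : MonotoneOn Φ (Set.Ici (0 : ℝ)))
    (hΦ_cont : ContinuousOn Φ (Set.Ici (0 : ℝ)))
    (hΦ0 : Φ 0 = 0)
    (hΦ_pos : ∀ t : ℝ, 0 < t → 0 < Φ t)
    (hΔ2 : ∃ c : ℝ, 0 < c ∧ ∀ t : ℝ, 0 ≤ t → Φ (2 * t) ≤ c * Φ t)
    (u : ℕ → Ω → E) (u₀ : Ω → E)
    (hu : ∀ n, StronglyMeasurable (u n)) (hu₀ : StronglyMeasurable u₀)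
    (hconv : ∀ᵐ x ∂μ, Tendsto (fun n => u n x) atTop (𝓝 (u₀ x)))
    (hfin : ∫⁻ x, ENNReal.ofReal (Φ ‖u₀ x‖) ∂μ ≠ ∞)
    (hint : Tendsto (fun n => ∫⁻ x, ENNReal.ofReal (Φ ‖u n x‖) ∂μ) atTop
      (𝓝 (∫⁻ x, ENNReal.ofReal (Φ ‖u₀ x‖) ∂μ))) :
    Tendsto (fun n => ∫⁻ x, ENNReal.ofReal (Φ ‖u n x - u₀ x‖) ∂μ) atTop (𝓝 0) := by
  obtain ⟨c, hc, hΔ⟩ := hΔ2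
  have hΦ_nonneg : ∀ t, 0 ≤ t → 0 ≤ Φ t := fun t ht =>
    hΦ0.symm.le.trans (hΦ_mono Set.self_mem_Ici ht ht)
  have hcont : Continuous fun v : E => ENNReal.ofReal (Φ ‖v‖) :=
    ENNReal.continuous_ofReal.comp
      (hΦ_cont.comp_continuous continuous_norm fun v => norm_nonneg v)
  have hmeas : ∀ {w : Ω → E}, StronglyMeasurable w →
      Measurable fun x => ENNReal.ofReal (Φ ‖w x‖) := fun hw =>
    (hcont.comp_stronglyMeasurable hw).measurable
  have hadd : ∀ w : Ω → E, StronglyMeasurable w →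
      ∫⁻ x, ENNReal.ofReal c * (ENNReal.ofReal (Φ ‖w x‖) + ENNReal.ofReal (Φ ‖u₀ x‖)) ∂μ =
        ENNReal.ofReal c *
          (∫⁻ x, ENNReal.ofReal (Φ ‖w x‖) ∂μ + ∫⁻ x, ENNReal.ofReal (Φ ‖u₀ x‖) ∂μ) :=
    fun w hw => by
      rw [lintegral_const_mul' _ _ ENNReal.ofReal_ne_top, lintegral_add_left (hmeas hw)]
  refine tendsto_lintegral_zero_of_le_of_tendsto_lintegral
    (g := fun n x => ENNReal.ofReal c * (ENNReal.ofReal (Φ ‖u n x‖) + ENNReal.ofReal (Φ ‖u₀ x‖)))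
    (G := fun x => ENNReal.ofReal c * (ENNReal.ofReal (Φ ‖u₀ x‖) + ENNReal.ofReal (Φ ‖u₀ x‖)))
    (fun n => hmeas ((hu n).sub hu₀))
    (fun n => ((hmeas (hu n)).add (hmeas hu₀)).const_mul _) (fun n x => ?_) ?_ ?_ ?_ ?_
  · rw [← ENNReal.ofReal_add (hΦ_nonneg _ (norm_nonneg _)) (hΦ_nonneg _ (norm_nonneg _)),
      ← ENNReal.ofReal_mul hc.le]
    exact ENNReal.ofReal_le_ofReal
      (apply_norm_sub_le_mul_add hΦ_mono hΦ_nonneg hc.le hΔ (u n x) (u₀ x))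
  · rw [hadd u₀ hu₀]
    exact ENNReal.mul_ne_top ENNReal.ofReal_ne_top (ENNReal.add_ne_top.2 ⟨hfin, hfin⟩)
  · filter_upwards [hconv] with x hx
    have h := (hcont.tendsto (u₀ x - u₀ x)).comp (hx.sub_const (u₀ x))
    simpa [Function.comp_def, hΦ0] using h
  · filter_upwards [hconv] with x hx
    exact ENNReal.Tendsto.const_mul (((hcont.tendsto _).comp hx).add_const _)
      (.inr ENNReal.ofReal_ne_top)
  · simp only [hadd _ hu₀, hadd _ (hu _)]
    exact ENNReal.Tendsto.const_mul (hint.add_const _) (.inr ENNReal.ofReal_ne_top)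
end

section
/- Let E be a separable reflexive real Banach space, E′ a real normed vector space, and T : E → E′ an injective compact continuous linear operator (a compact embedding). Let (x_n^*) be a sequence of continuous linear functionals on E that is total, i.e. if x_n^*(u) = 0 for all n then u = 0. Then, for every C > 0 there exists m₀ ∈ ℕ such that for all m ≥ m₀ and every u ∈ E satisfying ‖T u‖_{E′} = 1 and x_j^*(u) = 0 for all 1 ≤ j ≤ m, one has ‖u‖_E > C. Equivalently, the quantities τ_m := inf{‖u‖_E : u ∈ E, ‖T u‖_{E′} = 1, x_1^*(u) = ⋯ = x_m^*(u) = 0} tend to +∞ as m → ∞. -/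
open Filter Topology

/-- In a reflexive space, a bounded family converges weakly along every ultrafilter. -/
theorem exists_weak_limit_of_norm_le {ι E : Type*} [NormedAddCommGroup E] [NormedSpace ℝ E]
    (hrefl : Function.Surjective (NormedSpace.inclusionInDoubleDual ℝ E))
    (F : Ultrafilter ι) {u : ι → E} {C : ℝ} (hu : ∀ i, ‖u i‖ ≤ C) :
    ∃ v : E, ∀ f : StrongDual ℝ E, Tendsto (fun i => f (u i)) F (𝓝 (f v)) := by
  let w : ι → WeakDual ℝ (StrongDual ℝ E) := fun i =>
    StrongDual.toWeakDual (NormedSpace.inclusionInDoubleDual ℝ E (u i))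
  have hw : ∀ i, w i ∈ WeakDual.toStrongDual ⁻¹'
      Metric.closedBall (0 : StrongDual ℝ (StrongDual ℝ E)) C := fun i =>
    (dist_zero_right (NormedSpace.inclusionInDoubleDual ℝ E (u i))).trans_le <|
      (NormedSpace.double_dual_bound ℝ E (u i)).trans (hu i)
  obtain ⟨φ, -, hφ⟩ := (WeakDual.isCompact_closedBall
    (0 : StrongDual ℝ (StrongDual ℝ E)) C).ultrafilter_le_nhds (F.map w)
    (tendsto_principal.2 (Filter.Eventually.of_forall hw))
  obtain ⟨v, hv⟩ := hrefl (WeakDual.toStrongDual φ)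
  refine ⟨v, fun f => ?_⟩
  have hf := ((WeakDual.eval_continuous f).tendsto φ).comp (show Tendsto w F (𝓝 φ) from hφ)
  have hφv : φ f = f v := (DFunLike.congr_fun hv f).symm
  rw [hφv] at hf
  exact hf

/-- Lemma 3.12 of the paper: for a compact embedding `T : E → E'` of a separable
reflexive Banach space and a total sequence `(xⱼ*)` of functionals, the quantities
`τ_m = inf{‖u‖ : ‖Tu‖ = 1, x₁*(u) = ⋯ = x_m*(u) = 0}` tend to `+∞`. -/
theorem stmt6 {E : Type*} [NormedAddCommGroup E] [NormedSpace ℝ E] [CompleteSpace E]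
    [TopologicalSpace.SeparableSpace E]
    {E' : Type*} [NormedAddCommGroup E'] [NormedSpace ℝ E']
    (hrefl : Function.Surjective (NormedSpace.inclusionInDoubleDual ℝ E))
    (T : E →L[ℝ] E') (hTinj : Function.Injective T) (hTcomp : IsCompactOperator T)
    (x' : ℕ → E →L[ℝ] ℝ)
    (htotal : ∀ u : E, (∀ n : ℕ, 1 ≤ n → x' n u = 0) → u = 0) :
    ∀ C : ℝ, 0 < C → ∃ m₀ : ℕ, ∀ m : ℕ, m₀ ≤ m →
      ∀ u : E, ‖T u‖ = 1 → (∀ j : ℕ, 1 ≤ j → j ≤ m → x' j u = 0) → C < ‖u‖ := by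
  intro C _
  by_contra! h
  choose m hm u hTu hxu huC using h
  let F : Ultrafilter ℕ := hyperfilter ℕ
  have hF : (F : Filter ℕ) ≤ atTop := Nat.hyperfilter_le_atTop
  obtain ⟨v, hv⟩ := exists_weak_limit_of_norm_le hrefl F huC
  have hv0 : v = 0 := htotal v fun j hj => by
    refine tendsto_nhds_unique (hv (x' j)) (tendsto_const_nhds.congr' ?_)
    filter_upwards [hF (eventually_ge_atTop j)] with n hn
    exact (hxu n j hj (hn.trans (hm n))).symm
  obtain ⟨K, hK, hTK⟩ := IsCompactOperator.image_closedBall_subset_compact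
    (f := (T : E →ₗ[ℝ] E')) hTcomp C
  obtain ⟨y, -, hy⟩ := hK.ultrafilter_le_nhds (F.map fun n => T (u n))
    (tendsto_principal.2 (Filter.Eventually.of_forall fun n =>
      hTK ⟨u n, by simpa using huC n, rfl⟩))
  replace hy : Tendsto (fun n => T (u n)) F (𝓝 y) := hy
  have hy1 : ‖y‖ = 1 := by
    refine tendsto_nhds_unique hy.norm ?_
    simp only [hTu]
    exact tendsto_const_nhds
  have hy0 : y = 0 := SeparatingDual.eq_zero_of_forall_dual_eq_zero (R := ℝ) fun g => by
    refine tendsto_nhds_unique ((g.continuous.tendsto y).comp hy) ?_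
    simpa [hv0, Function.comp_def] using hv (g.comp T)
  simp [hy0] at hy1
end

section
/- (Mountain Pass Theorem.) Let E be a real Banach space and I : E → ℝ a C¹ functional (Fréchet differentiable with continuous derivative dI : E → E*) with I(0) ≤ 0. Suppose: (I₁) there exist r > 0 and ρ > 0 such that I(u) ≥ ρ for all u ∈ E with ‖u‖ = r; (I₂) there exists e ∈ E with ‖e‖ > r and I(e) ≤ 0. Set Γ = {γ ∈ C([0,1], E) : γ(0) = 0, γ(1) = e} and c = inf_{γ ∈ Γ} max_{t ∈ [0,1]} I(γ(t)). Then c ≥ ρ and I possesses a (PS)_c sequence, i.e. a sequence (u_n) ⊂ E with I(u_n) → c and ‖dI(u_n)‖_{E*} → 0. Moreover, if I satisfies the (PS)_c condition, then c is a critical value of I, i.e. there exists u ∈ E with dI(u) = 0 and I(u) = c. -/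
open Filter Topology

/-- `I` satisfies the `(PS)_c` condition (w.r.t. the derivative `dI`). -/
def PalaisSmaleC {E : Type*} [NormedAddCommGroup E] [NormedSpace ℝ E]
    (I : E → ℝ) (dI : E → E →L[ℝ] ℝ) (c : ℝ) : Prop :=
  ∀ x : ℕ → E, Tendsto (fun n => I (x n)) atTop (𝓝 c) →
    Tendsto (fun n => ‖dI (x n)‖) atTop (𝓝 0) →
    ∃ (y : E) (φ : ℕ → ℕ), StrictMono φ ∧ Tendsto (fun n => x (φ n)) atTop (𝓝 y)

/-- Ekeland's variational principle, in its weak form. -/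
theorem LowerSemicontinuous.exists_forall_le_add_mul_dist {X : Type*} [MetricSpace X]
    [CompleteSpace X] {Φ : X → ℝ} (hΦ : LowerSemicontinuous Φ) (hb : BddBelow (Set.range Φ))
    {ε : ℝ} (hε : 0 < ε) (x₀ : X) :
    ∃ x, Φ x ≤ Φ x₀ ∧ ∀ y, Φ x ≤ Φ y + ε * dist y x := by
  have step : ∀ (n : ℕ) (x : X), ∃ y, Φ y + ε * dist y x ≤ Φ x ∧
      ∀ z, Φ z + ε * dist z x ≤ Φ x → Φ y ≤ Φ z + 1 / ((n : ℝ) + 1) := by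
    intro n x
    have hne : (Φ '' {z | Φ z + ε * dist z x ≤ Φ x}).Nonempty := ⟨Φ x, x, by simp, rfl⟩
    obtain ⟨_, ⟨y, hy, rfl⟩, hlt⟩ :=
      Real.lt_sInf_add_pos hne (Nat.one_div_pos_of_nat (α := ℝ) (n := n))
    refine ⟨y, hy, fun z hz => hlt.le.trans ?_⟩
    gcongr
    exact csInf_le (hb.mono (Set.image_subset_range _ _)) ⟨z, hz, rfl⟩
  choose next hnext hmin using step
  let u : ℕ → X := fun n => Nat.rec x₀ next n
  have hu : ∀ n, u (n + 1) = next n (u n) := fun n => rfl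
  have hdesc : ∀ n m, n ≤ m → Φ (u m) + ε * dist (u m) (u n) ≤ Φ (u n) := by
    intro n m hnm
    induction m, hnm using Nat.le_induction with
    | base => simp
    | succ m _ ih =>
      have h := hnext m (u m)
      rw [← hu] at h
      have := mul_le_mul_of_nonneg_left (dist_triangle (u (m + 1)) (u m) (u n)) hε.le
      linarith
  have hanti : Antitone fun n => Φ (u n) := fun n m hnm => by
    have h := hdesc n m hnm
    have : 0 ≤ ε * dist (u m) (u n) := by positivity
    dsimp only
    linarith
  have hbu : BddBelow (Set.range fun n => Φ (u n)) := hb.mono (Set.range_comp_subset_range u Φ)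
  have hcauchy : CauchySeq u := by
    refine cauchySeq_of_le_tendsto_0' (fun n => (Φ (u n) - ⨅ k, Φ (u k)) / ε) ?_ ?_
    · intro n m hnm
      rw [le_div_iff₀ hε, mul_comm, dist_comm]
      linarith [hdesc n m hnm, ciInf_le hbu m]
    · simpa using ((tendsto_atTop_ciInf hanti hbu).sub_const (⨅ k, Φ (u k))).div_const ε
  obtain ⟨x, hx⟩ := cauchySeq_tendsto_of_complete hcauchy
  have hlim : ∀ n, Φ x + ε * dist x (u n) ≤ Φ (u n) := by
    intro n
    have hlsc : LowerSemicontinuous fun z => Φ z + ε * dist z (u n) :=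
      hΦ.add (Continuous.lowerSemicontinuous (by fun_prop))
    exact (hlsc.isClosed_preimage (Φ (u n))).mem_of_tendsto hx
      ((eventually_ge_atTop n).mono fun m hm => hdesc n m hm)
  refine ⟨x, ?_, fun y => ?_⟩
  · have h := hlim 0
    have : 0 ≤ ε * dist x (u 0) := by positivity
    change Φ x + ε * dist x (u 0) ≤ Φ x₀ at h
    linarith
  · by_contra! hy
    have hle : ∀ n : ℕ, Φ x ≤ Φ y + 1 / ((n : ℝ) + 1) := by
      intro n
      have h := mul_le_mul_of_nonneg_left (dist_triangle y x (u n)) hε.le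
      have h₁ := hmin n (u n) y (by linarith [hlim n])
      rw [← hu] at h₁
      have h₂ : 0 ≤ ε * dist x (u (n + 1)) := by positivity
      linarith [hlim (n + 1)]
    have hxy : Φ x ≤ Φ y := by
      have hlim := (tendsto_one_div_add_atTop_nhds_zero_nat (𝕜 := ℝ)).const_add (Φ y)
      simpa using ge_of_tendsto' hlim hle
    have : 0 ≤ ε * dist y x := by positivity
    linarith

theorem ContinuousLinearMap.exists_norm_le_one_apply_lt_neg {E : Type*} [NormedAddCommGroup E]
    [NormedSpace ℝ E] (f : E →L[ℝ] ℝ) {κ : ℝ} (hκ : κ < ‖f‖) : ∃ v, ‖v‖ ≤ 1 ∧ f v < -κ := by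
  obtain ⟨x, hx, hfx⟩ := f.exists_lt_apply_of_lt_opNorm hκ
  rw [Real.norm_eq_abs, lt_abs] at hfx
  obtain h | h := hfx
  · exact ⟨-x, by simpa using hx.le, by simpa using h⟩
  · exact ⟨x, hx.le, by linarith⟩

section Descent

variable {E K : Type*} [NormedAddCommGroup E] [NormedSpace ℝ E] [TopologicalSpace K]
  [CompactSpace K] {I : E → ℝ} {dI : E → E →L[ℝ] ℝ}

/-- A continuous field of descent directions along `γ`, vanishing on the closed set `A`. -/
theorem exists_continuous_descent_direction [T2Space K] (hI : Continuous I) (hcont : Continuous dI)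
    (γ : C(K, E)) {A : Set K} (hA : IsClosed A) {a κ : ℝ} (hAI : ∀ t ∈ A, I (γ t) < a)
    (hκ : ∀ t, a ≤ I (γ t) → κ < ‖dI (γ t)‖) :
    ∃ v : C(K, E), (∀ t, ‖v t‖ ≤ 1) ∧ (∀ t ∈ A, v t = 0) ∧
      ∀ t, a ≤ I (γ t) → dI (γ t) (v t) < -κ := by
  let T : K → Set E := fun t =>
    {w | ‖w‖ ≤ 1} ∩ ({w | t ∈ A → w = 0} ∩ {w | a ≤ I (γ t) → dI (γ t) w < -κ})
  have hT : ∀ t, Convex ℝ (T t) := by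
    intro t
    refine Convex.inter ?_ (Convex.inter ?_ ?_)
    · simpa [Metric.closedBall, dist_zero_right] using convex_closedBall (0 : E) 1
    · by_cases h : t ∈ A
      · simp [h]
      · simp [h, convex_univ]
    · by_cases h : a ≤ I (γ t)
      · simpa [h] using convex_halfSpace_lt (dI (γ t)).isLinear (-κ)
      · simp [h, convex_univ]
  obtain ⟨v, hv⟩ := exists_continuous_forall_mem_convex_of_local_const hT (fun t => by
    by_cases ht : a ≤ I (γ t)
    · obtain ⟨w, hw, hlt⟩ := (dI (γ t)).exists_norm_le_one_apply_lt_neg (hκ t ht)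
      have hwc : Continuous fun s => dI (γ s) w := by fun_prop
      have htA : t ∉ A := fun h => (hAI t h).not_ge ht
      refine ⟨w, ?_⟩
      filter_upwards [hA.isOpen_compl.mem_nhds htA, hwc.continuousAt.eventually_lt_const hlt]
        with s hsA hs
      exact ⟨hw, fun h => (hsA h).elim, fun _ => hs⟩
    · have hIc : Continuous fun s => I (γ s) := by fun_prop
      refine ⟨0, ?_⟩
      filter_upwards [hIc.continuousAt.eventually_lt_const (not_le.1 ht)] with s hs
      exact ⟨by simp, fun _ => rfl, fun h => (hs.not_ge h).elim⟩)
  exact ⟨v, fun t => (hv t).1, fun t => (hv t).2.1, fun t => (hv t).2.2⟩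

theorem le_sub_mul_of_forall_apply_le (hderiv : ∀ x, HasFDerivAt I (dI x) x) {x v : E} {κ s : ℝ}
    (hs : 0 ≤ s) (h : ∀ σ ∈ Set.Ioo 0 s, dI (x + σ • v) v ≤ -κ) :
    I (x + s • v) ≤ I x - κ * s := by
  have hd : ∀ σ : ℝ, HasDerivAt (fun σ : ℝ => I (x + σ • v)) (dI (x + σ • v) v) σ := by
    intro σ
    have hline : HasDerivAt (fun σ : ℝ => x + σ • v) v σ := by
      simpa using ((hasDerivAt_id σ).smul_const v).const_add x
    exact (hderiv _).comp_hasDerivAt σ hline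
  have hmv := (convex_Icc 0 s).image_sub_le_mul_sub_of_deriv_le (C := -κ)
    (fun σ _ => (hd σ).continuousAt.continuousWithinAt)
    (fun σ _ => (hd σ).differentiableAt.differentiableWithinAt)
    (fun σ hσ => by rw [(hd σ).deriv]; rw [interior_Icc] at hσ; exact h σ hσ)
    0 (Set.left_mem_Icc.2 hs) s (Set.right_mem_Icc.2 hs) hs
  simp only [zero_smul, add_zero, sub_zero] at hmv
  linarith

/-- Moving along a descent field lowers the maximum of `I` at a definite rate. -/
theorem exists_pos_forall_le_sub_mul (hderiv : ∀ x, HasFDerivAt I (dI x) x)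
    (hcont : Continuous dI) (γ v : C(K, E)) {a m κ : ℝ} (ham : a < m) (hm : ∀ t, I (γ t) ≤ m)
    (hv : ∀ t, a ≤ I (γ t) → dI (γ t) (v t) < -κ) :
    ∃ s > 0, ∀ t, I (γ t + s • v t) ≤ m - κ * s := by
  have hI : Continuous I := continuous_iff_continuousAt.2 fun x => (hderiv x).continuousAt
  have hM : IsCompact {t | a ≤ I (γ t)} :=
    (isClosed_le continuous_const (hI.comp γ.continuous)).isCompact
  have hdc : Continuous fun p : ℝ × K => dI (γ p.2 + p.1 • v p.2) (v p.2) := by fun_prop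
  have hIc : Continuous fun p : ℝ × K => I (γ p.2 + p.1 • v p.2) - I (γ p.2) := by fun_prop
  have h₁ : ∀ᶠ σ : ℝ in 𝓝 0, ∀ t ∈ {t | a ≤ I (γ t)}, dI (γ t + σ • v t) (v t) < -κ :=
    hM.eventually_forall_of_forall_eventually fun t ht =>
      hdc.continuousAt.eventually_lt_const (by simpa using hv t ht)
  have h₂ : ∀ᶠ σ : ℝ in 𝓝 0, ∀ t ∈ Set.univ, I (γ t + σ • v t) - I (γ t) < (m - a) / 2 :=
    isCompact_univ.eventually_forall_of_forall_eventually fun t _ =>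
      hIc.continuousAt.eventually_lt_const (by simpa using ham)
  have h₃ : ∀ᶠ σ : ℝ in 𝓝 0, κ * σ < (m - a) / 2 :=
    (Continuous.continuousAt (by fun_prop)).eventually_lt_const (by simpa using ham)
  obtain ⟨δ, hδ, hball⟩ := Metric.eventually_nhds_iff.1 (h₁.and (h₂.and h₃))
  have hsmall : ∀ σ ∈ Set.Ioc 0 (δ / 2), dist σ 0 < δ := by
    rintro σ ⟨hσ, hσ'⟩
    rw [Real.dist_0_eq_abs, abs_of_pos hσ]
    linarith
  refine ⟨δ / 2, half_pos hδ, fun t => ?_⟩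
  by_cases ht : a ≤ I (γ t)
  · have := le_sub_mul_of_forall_apply_le hderiv (half_pos hδ).le fun σ hσ =>
      ((hball (hsmall σ ⟨hσ.1, hσ.2.le⟩)).1 t ht).le
    linarith [hm t]
  · obtain ⟨-, h₂, h₃⟩ := hball (hsmall (δ / 2) ⟨half_pos hδ, le_rfl⟩)
    linarith [h₂ t trivial]

end Descent

theorem bddAbove_range_comp_path {X : Type*} [TopologicalSpace X] {I : X → ℝ} (hI : Continuous I)
    {x y : X} (γ : Path x y) : BddAbove (Set.range fun t => I (γ t)) :=
  (isCompact_range (hI.comp γ.continuous)).bddAbove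

/-- The quantitative minimax principle: if every path from `x` to `y` meets the level `ρ`, which
lies above the values of `I` at the endpoints, then there are almost critical points of `I` at
almost the minimax level. -/
theorem exists_almost_critical_of_minimax {E : Type*} [NormedAddCommGroup E] [NormedSpace ℝ E]
    [CompleteSpace E] {I : E → ℝ} {dI : E → E →L[ℝ] ℝ} (hderiv : ∀ x, HasFDerivAt I (dI x) x)
    (hcont : Continuous dI) {x y : E} {ρ : ℝ} (hx : I x < ρ) (hy : I y < ρ)
    (hρ : ∀ γ : Path x y, ρ ≤ ⨆ t, I (γ t)) {ε : ℝ} (hε : 0 < ε) :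
    ∃ u, |I u - ⨅ γ : Path x y, ⨆ t, I (γ t)| ≤ ε ∧ ‖dI u‖ ≤ ε := by
  have hI : Continuous I := continuous_iff_continuousAt.2 fun x => (hderiv x).continuousAt
  set c := ⨅ γ : Path x y, ⨆ t, I (γ t)
  let S : Set C(unitInterval, E) := {f | f 0 = x ∧ f 1 = y}
  have hS : IsClosed S :=
    (isClosed_eq (continuous_eval_const 0) continuous_const).inter
      (isClosed_eq (continuous_eval_const 1) continuous_const)
  have : CompleteSpace S := hS.completeSpace_coe
  let toPath : S → Path x y := fun f => ⟨f.1, f.2.1, f.2.2⟩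
  let Φ : S → ℝ := fun f => ⨆ t, I (f.1 t)
  have hbdd : ∀ f : S, BddAbove (Set.range fun t => I (f.1 t)) := fun f =>
    bddAbove_range_comp_path hI (toPath f)
  have hΦ : LowerSemicontinuous Φ := by
    refine lowerSemicontinuous_ciSup hbdd fun t => Continuous.lowerSemicontinuous ?_
    exact hI.comp ((continuous_eval_const t).comp continuous_subtype_val)
  have hΦb : BddBelow (Set.range Φ) := ⟨ρ, by rintro _ ⟨f, rfl⟩; exact hρ (toPath f)⟩
  have hcb : BddBelow (Set.range fun γ : Path x y => ⨆ t, I (γ t)) :=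
    ⟨ρ, by rintro _ ⟨γ, rfl⟩; exact hρ γ⟩
  have hne : Nonempty (Path x y) := PathConnectedSpace.joined x y
  obtain ⟨γ₀, hγ₀⟩ := exists_lt_of_ciInf_lt (show c < c + ε by linarith)
  obtain ⟨f, hf₀, hf⟩ := hΦ.exists_forall_le_add_mul_dist hΦb (half_pos hε)
    ⟨γ₀.toContinuousMap, γ₀.source, γ₀.target⟩
  have hfc : Φ f < c + ε := hf₀.trans_lt hγ₀
  have hcf : c ≤ Φ f := ciInf_le hcb (toPath f)
  have hρf : ρ ≤ Φ f := hρ (toPath f)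
  by_contra! hno
  obtain ⟨a, ha, haf⟩ := exists_between
    (max_lt (by linarith) (max_lt (by linarith) (by linarith)) :
      max (Φ f - ε) (max (I x) (I y)) < Φ f)
  simp only [max_lt_iff] at ha
  have hle : ∀ t, I (f.1 t) ≤ Φ f := fun t => le_ciSup (hbdd f) t
  obtain ⟨v, hv₁, hv₀, hv⟩ := exists_continuous_descent_direction (κ := ε) hI hcont f.1
    (Set.toFinite {(0 : unitInterval), 1}).isClosed (a := a)
    (by
      rintro t (rfl | rfl)
      · rw [f.2.1]; exact ha.2.1
      · rw [f.2.2]; exact ha.2.2)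
    (fun t ht => hno _ (abs_le.2 ⟨by linarith [ha.1], by linarith [hle t]⟩))
  obtain ⟨s, hs, hdec⟩ := exists_pos_forall_le_sub_mul hderiv hcont f.1 v haf hle hv
  let g : S := ⟨f.1 + s • v, by simp [hv₀, f.2.1], by simp [hv₀, f.2.2]⟩
  have hg : Φ g ≤ Φ f - ε * s := ciSup_le hdec
  have hdist : dist g f ≤ s := by
    refine (ContinuousMap.dist_le hs.le).2 fun t => ?_
    simpa [g, dist_eq_norm, norm_smul, abs_of_pos hs] using
      mul_le_mul_of_nonneg_left (hv₁ t) hs.le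
  nlinarith [hf g, mul_le_mul_of_nonneg_left hdist (half_pos hε).le, mul_pos hε hs]

/-- A path which starts inside the sphere of radius `r` and ends outside it crosses the sphere. -/
theorem Path.exists_norm_eq {E : Type*} [NormedAddCommGroup E] {x y : E} (γ : Path x y) {r : ℝ}
    (hx : ‖x‖ ≤ r) (hy : r ≤ ‖y‖) : ∃ t, ‖γ t‖ = r :=
  mem_range_of_exists_le_of_exists_ge (f := fun t => ‖γ t‖) γ.continuous.norm
    ⟨0, by simpa using hx⟩ ⟨1, by simpa using hy⟩

/-- Mountain Pass Theorem (Theorem 3.4 of the paper).  With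
`c = inf_{γ} max_{t ∈ [0,1]} I(γ(t))` over paths `γ` from `0` to `e`,
one has `c ≥ ρ`, `I` has a `(PS)_c` sequence, and if `I` satisfies the `(PS)_c`
condition then `c` is a critical value. -/
theorem stmt8 {E : Type*} [NormedAddCommGroup E] [NormedSpace ℝ E] [CompleteSpace E]
    (I : E → ℝ) (dI : E → E →L[ℝ] ℝ)
    (hderiv : ∀ x, HasFDerivAt I (dI x) x) (hcont : Continuous dI)
    (hI0 : I 0 ≤ 0)
    (r ρ : ℝ) (hr : 0 < r) (hρ : 0 < ρ)
    (hI1 : ∀ u : E, ‖u‖ = r → ρ ≤ I u)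
    (e : E) (he : r < ‖e‖) (hIe : I e ≤ 0) :
    ρ ≤ (⨅ γ : Path (0 : E) e, ⨆ t : unitInterval, I (γ t)) ∧
    (∃ u : ℕ → E,
      Tendsto (fun n => I (u n)) atTop
        (𝓝 (⨅ γ : Path (0 : E) e, ⨆ t : unitInterval, I (γ t))) ∧
      Tendsto (fun n => ‖dI (u n)‖) atTop (𝓝 0)) ∧
    (PalaisSmaleC I dI (⨅ γ : Path (0 : E) e, ⨆ t : unitInterval, I (γ t)) →
      ∃ u : E, dI u = 0 ∧ I u = ⨅ γ : Path (0 : E) e, ⨆ t : unitInterval, I (γ t)) := by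
  have hI : Continuous I := continuous_iff_continuousAt.2 fun x => (hderiv x).continuousAt
  have hlevel : ∀ γ : Path (0 : E) e, ρ ≤ ⨆ t, I (γ t) := by
    intro γ
    obtain ⟨t, ht⟩ := γ.exists_norm_eq (by simpa using hr.le) he.le
    exact (hI1 _ ht).trans (le_ciSup (bddAbove_range_comp_path hI γ) t)
  have hne : Nonempty (Path (0 : E) e) := PathConnectedSpace.joined 0 e
  have hseq : ∃ u : ℕ → E,
      Tendsto (fun n => I (u n)) atTop
        (𝓝 (⨅ γ : Path (0 : E) e, ⨆ t : unitInterval, I (γ t))) ∧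
      Tendsto (fun n => ‖dI (u n)‖) atTop (𝓝 0) := by
    choose u huI hud using fun n : ℕ => exists_almost_critical_of_minimax hderiv hcont
      (hI0.trans_lt hρ) (hIe.trans_lt hρ) hlevel (Nat.one_div_pos_of_nat (α := ℝ) (n := n))
    have h0 := tendsto_one_div_add_atTop_nhds_zero_nat (𝕜 := ℝ)
    exact ⟨u, tendsto_iff_dist_tendsto_zero.2 (squeeze_zero (fun _ => dist_nonneg) huI h0),
      squeeze_zero (fun _ => norm_nonneg _) hud h0⟩
  refine ⟨le_ciInf hlevel, hseq, fun hPS => ?_⟩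
  obtain ⟨u, huI, hud⟩ := hseq
  obtain ⟨y, φ, hφ, hy⟩ := hPS u huI hud
  refine ⟨y, ?_, ?_⟩
  · exact norm_eq_zero.1 (tendsto_nhds_unique ((hcont.norm.tendsto y).comp hy)
      (hud.comp hφ.tendsto_atTop))
  · exact tendsto_nhds_unique ((hI.tendsto y).comp hy) (huI.comp hφ.tendsto_atTop)
end

section
/- (Fountain Theorem.) Let X be a real Banach space with a Schauder basis (e_j)_{j≥1}, i.e. every x ∈ X has a unique representation x = Σ_{j=1}^∞ a_j e_j with a_j ∈ ℝ and the partial sums converging to x in norm. For k ≥ 1 set Y_k = span{e_1, …, e_k} and Z_k = the closure of span{e_j : j ≥ k}. Let L : X → ℝ be a C¹ functional (Fréchet differentiable with continuous derivative dL : X → X*) which is even (L(−u) = L(u) for all u ∈ X) and satisfies the Palais–Smale (PS) condition. Suppose that for every k ∈ ℕ there exist ρ_k > r_k > 0 such that: (L₁) max{L(u) : u ∈ Y_k, ‖u‖ = ρ_k} ≤ 0; (L₂) b(k) := inf{L(u) : u ∈ Z_k, ‖u‖ = r_k} → +∞ as k → ∞. Then L possesses an unbounded sequence of critical values: there exist u_k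 ∈ X with dL(u_k) = 0 for every k and L(u_k) → +∞. -/
open Filter Topology

/-- `L` satisfies the Palais–Smale condition (w.r.t. the derivative `dL`). -/
def PalaisSmale {X : Type*} [NormedAddCommGroup X] [NormedSpace ℝ X]
    (L : X → ℝ) (dL : X → X →L[ℝ] ℝ) : Prop :=
  ∀ x : ℕ → X, (∃ M : ℝ, ∀ n, |L (x n)| ≤ M) →
    Tendsto (fun n => ‖dL (x n)‖) atTop (𝓝 0) →
    ∃ (y : X) (φ : ℕ → ℕ), StrictMono φ ∧ Tendsto (fun n => x (φ n)) atTop (𝓝 y)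

/-- Chains with coefficients in `ZMod 2`; the simplices are lists of vertices, and the empty list is
the simplex of dimension `-1`. -/
abbrev ListChain (V : Type*) := List V →₀ ZMod 2

namespace ListChain

variable {V W M : Type*} [AddCommGroup M] [Module (ZMod 2) M]

/-- The chain consisting of a single simplex. -/
noncomputable def simplex (l : List V) : ListChain V := Finsupp.single l 1

/-- Linear extension of a function on simplices. -/
noncomputable def extend (φ : List V → M) : ListChain V →ₗ[ZMod 2] M :=
  Finsupp.linearCombination (ZMod 2) φ

@[simp] lemma extend_simplex (φ : List V → M) (l : List V) : extend φ (simplex l) = φ l := by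
  simp [extend, simplex]

/-- The cone with apex `a`. -/
noncomputable def cone (a : V) : ListChain V →ₗ[ZMod 2] ListChain V :=
  extend fun l => simplex (a :: l)

@[simp] lemma cone_simplex (a : V) (l : List V) : cone a (simplex l) = simplex (a :: l) := by
  simp [cone]

/-- The chain map induced by a map of vertices. -/
noncomputable def push (f : V → W) : ListChain V →ₗ[ZMod 2] ListChain W :=
  extend fun l => simplex (l.map f)

@[simp] lemma push_simplex (f : V → W) (l : List V) :
    push f (simplex l) = simplex (l.map f) := by
  simp [push]

/-- Chains all of whose simplices belong to `P`. -/
noncomputable def supp (P : Set (List V)) : Submodule (ZMod 2) (ListChain V) :=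
  Finsupp.supported (ZMod 2) (ZMod 2) P

lemma simplex_mem_supp {P : Set (List V)} {l : List V} (h : l ∈ P) : simplex l ∈ supp P :=
  Finsupp.single_mem_supported _ _ h

lemma supp_mono {P Q : Set (List V)} (h : P ⊆ Q) : supp P ≤ supp Q := Finsupp.supported_mono h

lemma supp_eq_span (P : Set (List V)) :
    supp P = Submodule.span (ZMod 2) (simplex '' P) :=
  Finsupp.supported_eq_span_single _ _

lemma map_mem_of_supp {P : Set (List V)} (T : ListChain V →ₗ[ZMod 2] M)
    (N : Submodule (ZMod 2) M) (h : ∀ l ∈ P, T (simplex l) ∈ N) {c : ListChain V}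
    (hc : c ∈ supp P) : T c ∈ N := by
  have : supp P ≤ N.comap T := by
    rw [supp_eq_span, Submodule.span_le]
    rintro _ ⟨l, hl, rfl⟩
    exact h l hl
  exact this hc

lemma eq_of_supp {P : Set (List V)} (S T : ListChain V →ₗ[ZMod 2] M)
    (h : ∀ l ∈ P, S (simplex l) = T (simplex l)) {c : ListChain V} (hc : c ∈ supp P) :
    S c = T c := by
  have := map_mem_of_supp (S - T) ⊥ (P := P) (fun l hl => by simp [h l hl]) hc
  simpa [sub_eq_zero] using this

lemma mem_supp_univ (c : ListChain V) : c ∈ supp (Set.univ : Set (List V)) := by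
  simp [supp, Finsupp.supported_univ]

lemma linearMap_ext {S T : ListChain V →ₗ[ZMod 2] M}
    (h : ∀ l, S (simplex l) = T (simplex l)) : S = T :=
  LinearMap.ext fun c => eq_of_supp S T (fun l _ => h l) (mem_supp_univ c)

lemma push_cone (f : V → W) (a : V) (c : ListChain V) :
    push f (cone a c) = cone (f a) (push f c) := by
  have : push f ∘ₗ cone a = cone (f a) ∘ₗ push f := linearMap_ext fun l => by simp
  exact LinearMap.congr_fun this c

/-- The sum of the codimension-one faces of a simplex. -/
noncomputable def faceSum : List V → ListChain V
  | [] => 0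
  | a :: l => simplex l + cone a (faceSum l)

/-- The boundary operator of the augmented chain complex. -/
noncomputable def bd : ListChain V →ₗ[ZMod 2] ListChain V := extend faceSum

@[simp] lemma bd_simplex (l : List V) : bd (simplex l) = faceSum l := by simp [bd]

lemma bd_cone (a : V) (c : ListChain V) : bd (cone a c) = c + cone a (bd c) := by
  have : bd ∘ₗ cone a = LinearMap.id + cone a ∘ₗ bd := linearMap_ext fun l => by
    simp [faceSum]
  exact LinearMap.congr_fun this c

lemma bd_faceSum (l : List V) : bd (faceSum l) = 0 := by
  induction l with
  | nil => simp [faceSum]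
  | cons a l ih => simp [faceSum, bd_cone, ih, ZModModule.add_self]

lemma push_bd (f : V → W) (c : ListChain V) : push f (bd c) = bd (push f c) := by
  have : push f ∘ₗ bd = bd ∘ₗ push f := linearMap_ext fun l => by
    induction l with
    | nil => simp [faceSum]
    | cons a l ih =>
      simp only [LinearMap.comp_apply, bd_simplex, push_simplex] at ih ⊢
      simp [faceSum, push_cone, ih]
  exact LinearMap.congr_fun this c

lemma cone_mem_supp {P Q : Set (List V)} {a : V} (h : ∀ l ∈ P, a :: l ∈ Q) {c : ListChain V}
    (hc : c ∈ supp P) : cone a c ∈ supp Q :=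
  map_mem_of_supp _ _ (fun l hl => by simpa using simplex_mem_supp (h l hl)) hc

lemma push_mem_supp {P : Set (List V)} {Q : Set (List W)} {f : V → W}
    (h : ∀ l ∈ P, l.map f ∈ Q) {c : ListChain V} (hc : c ∈ supp P) : push f c ∈ supp Q :=
  map_mem_of_supp _ _ (fun l hl => by simpa using simplex_mem_supp (h l hl)) hc

lemma faceSum_mem_supp (l : List V) :
    faceSum l ∈ supp {l' | l'.Sublist l ∧ l'.length + 1 = l.length} := by
  induction l with
  | nil => simp [faceSum]
  | cons a l ih =>
    refine add_mem (simplex_mem_supp (by simp)) (cone_mem_supp ?_ ih)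
    rintro l' ⟨h1, h2⟩
    exact ⟨h1.cons_cons a, by simpa using h2⟩

lemma bd_mem_supp {P Q : Set (List V)}
    (h : ∀ l ∈ P, ∀ l' : List V, l'.Sublist l → l'.length + 1 = l.length → l' ∈ Q)
    {c : ListChain V} (hc : c ∈ supp P) : bd c ∈ supp Q :=
  map_mem_of_supp _ _ (fun l hl => by
    simpa using supp_mono (fun l' hl' => h l hl l' hl'.1 hl'.2) (faceSum_mem_supp l)) hc

/-- A permutation-invariant cochain has a permutation-invariant coboundary. -/
lemma extend_faceSum_perm {φ : List V → M} (hφ : ∀ l l', l.Perm l' → φ l = φ l')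
    {l l' : List V} (h : l.Perm l') : extend φ (faceSum l) = extend φ (faceSum l') := by
  have key : ∀ (ψ : List V → M) (a : V) (c : ListChain V),
      extend ψ (cone a c) = extend (fun l => ψ (a :: l)) c := fun ψ a c => by
    have : extend ψ ∘ₗ cone a = extend (fun l => ψ (a :: l)) := linearMap_ext fun l => by simp
    exact LinearMap.congr_fun this c
  induction h generalizing φ with
  | nil => rfl
  | @cons a l l' h ih =>
    simp only [faceSum, map_add, extend_simplex, key, hφ _ _ h]
    rw [ih (φ := fun l => φ (a :: l)) fun l l' h => hφ _ _ (h.cons a)]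
  | swap a b l =>
    simp only [faceSum, map_add, extend_simplex, key, cone_simplex]
    have : (fun l => φ (a :: b :: l)) = fun l => φ (b :: a :: l) :=
      funext fun l => hφ _ _ (List.Perm.swap b a l)
    rw [this]; abel
  | trans _ _ ih1 ih2 => rw [ih1 hφ, ih2 hφ]

/-! ### Alternating simplices -/

/-- The indicator of lists alternating in sign, starting with `s`. -/
def alt : Bool → List Bool → ZMod 2
  | _, [] => 1
  | s, a :: l => if a = s then alt (!s) l else 0

lemma extend_alt_faceSum (s : Bool) (l : List Bool) :
    extend (alt s) (faceSum l) = alt s l + alt (!s) l := by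
  induction l generalizing s with
  | nil => simp [faceSum, alt]; decide
  | cons a l ih =>
    have hc : extend (alt s) (cone a (faceSum l)) =
        if a = s then extend (alt (!s)) (faceSum l) else 0 := by
      have : extend (alt s) ∘ₗ cone a = if a = s then extend (alt (!s)) else 0 :=
        linearMap_ext fun l => by split_ifs with h <;> simp [alt, h]
      have := LinearMap.congr_fun this (faceSum l)
      simp only [LinearMap.comp_apply] at this
      rw [this]; split_ifs <;> simp
    simp only [faceSum, map_add, extend_simplex, hc, ih]
    have h2 : ∀ x y : ZMod 2, x + (y + x) = y := by decide
    by_cases h : a = s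
    · subst h; simp [alt, h2]
    · have : a = !s := by cases a <;> cases s <;> simp_all
      subst this; simp [alt]

/-- A label is a natural number together with a sign; `flip` changes the sign. -/
def flip (x : ℕ × Bool) : ℕ × Bool := (x.1, !x.2)

lemma flip_flip (x : ℕ × Bool) : flip (flip x) = x := by simp [flip]

/-- Labels that, once sorted by their absolute value, are strictly increasing and have alternating
signs starting with `s`. -/
def IsAlternating (s : Bool) (l : List (ℕ × Bool)) : Prop :=
  ∃ L : List (ℕ × Bool), L.Perm l ∧ L.Pairwise (fun x y => x.1 < y.1) ∧ alt s (L.map Prod.snd) = 1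

open Classical in
/-- The indicator of alternating lists of labels. -/
noncomputable def altLabel (s : Bool) (l : List (ℕ × Bool)) : ZMod 2 :=
  if IsAlternating s l then 1 else 0

lemma altLabel_perm (s : Bool) (l l' : List (ℕ × Bool)) (h : l.Perm l') :
    altLabel s l = altLabel s l' := by
  have : IsAlternating s l ↔ IsAlternating s l' :=
    ⟨fun ⟨L, h1, h2⟩ => ⟨L, h1.trans h, h2⟩, fun ⟨L, h1, h2⟩ => ⟨L, h1.trans h.symm, h2⟩⟩
  unfold altLabel
  split_ifs <;> simp_all

lemma alt_not_map_not (s : Bool) (l : List Bool) : alt (!s) (l.map (!·)) = alt s l := by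
  induction l generalizing s with
  | nil => rfl
  | cons a l ih => simp [alt, ← ih (!s)]

lemma IsAlternating.map_flip {s : Bool} {l : List (ℕ × Bool)} (h : IsAlternating s l) :
    IsAlternating (!s) (l.map flip) := by
  obtain ⟨L, h1, h2, h3⟩ := h
  refine ⟨L.map flip, h1.map _, ?_, ?_⟩
  · rw [List.pairwise_map]; exact h2
  · rw [← h3, ← alt_not_map_not]; simp [flip, Function.comp_def]

lemma altLabel_map_flip (s : Bool) (l : List (ℕ × Bool)) :
    altLabel (!s) (l.map flip) = altLabel s l := by
  have : IsAlternating (!s) (l.map flip) ↔ IsAlternating s l :=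
    ⟨fun h => by simpa [Function.comp_def, flip_flip] using h.map_flip, fun h => h.map_flip⟩
  unfold altLabel
  split_ifs <;> simp_all

lemma altLabel_nil (s : Bool) : altLabel s [] = 1 := by
  rw [altLabel, if_pos ⟨[], by simp [alt]⟩]

lemma altLabel_eq_zero {s : Bool} {k : ℕ} {l : List (ℕ × Bool)} (h : ∀ x ∈ l, x.1 < k)
    (hl : k < l.length) : altLabel s l = 0 := by
  rw [altLabel, if_neg]
  rintro ⟨L, h1, h2, -⟩
  have h3 : (L.map Prod.fst).Nodup := by
    rw [List.Nodup, List.pairwise_map]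
    exact h2.imp fun h => h.ne
  have h4 : (L.map Prod.fst) ⊆ List.range k := by
    intro i hi
    obtain ⟨x, hx, rfl⟩ := List.mem_map.1 hi
    exact List.mem_range.2 (h x (h1.subset hx))
  have := (List.subperm_of_subset h3 h4).length_le
  simp [h1.length_eq] at this
  omega

/-- No two labels are opposite. -/
def NoOpposite (l : List (ℕ × Bool)) : Prop := ∀ x ∈ l, ∀ y ∈ l, x.1 = y.1 → x = y

lemma strict_of_alt {s : Bool} {L : List (ℕ × Bool)} (h1 : L.Pairwise (fun x y => x.1 ≤ y.1))
    (h2 : NoOpposite L) (h3 : alt s (L.map Prod.snd) ≠ 0) :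
    L.Pairwise (fun x y => x.1 < y.1) := by
  have : IsTrans (ℕ × Bool) (fun x y => x.1 < y.1) := ⟨fun _ _ _ => lt_trans⟩
  rw [← List.isChain_iff_pairwise]
  induction L generalizing s with
  | nil => simp
  | cons a l ih =>
    have hs : a.2 = s ∧ alt (!s) (l.map Prod.snd) ≠ 0 := by
      by_contra hcon
      apply h3
      simp only [List.map_cons, alt]
      split_ifs with h <;> simp_all
    have hl := ih (List.pairwise_cons.1 h1).2
      (fun x hx y hy => h2 x (List.mem_cons_of_mem _ hx) y (List.mem_cons_of_mem _ hy)) hs.2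
    cases l with
    | nil => simp
    | cons b l =>
      refine List.isChain_cons_cons.2 ⟨lt_of_le_of_ne ((List.pairwise_cons.1 h1).1 b (by simp)) ?_, hl⟩
      intro hab
      have := h2 a (by simp) b (by simp) hab
      subst this
      have h4 := hs.2
      simp [alt, hs.1] at h4

lemma altLabel_of_sorted {s : Bool} {L : List (ℕ × Bool)}
    (h1 : L.Pairwise (fun x y => x.1 ≤ y.1)) (h2 : NoOpposite L) :
    altLabel s L = alt s (L.map Prod.snd) := by
  have h01 : ∀ x : ZMod 2, x ≠ 1 → x = 0 := by decide
  rw [altLabel]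
  split_ifs with h
  · obtain ⟨L', h3, h4, h5⟩ := h
    rw [List.Perm.eq_of_pairwise (le := fun x y : ℕ × Bool => x.1 ≤ y.1)
      (fun a b ha hb hab hba => h2 a (h3.subset ha) b hb (le_antisymm hab hba))
      (h4.imp fun h => h.le) h1 h3] at h5
    exact h5.symm
  · refine (h01 _ fun h5 => h ⟨L, List.Perm.refl _, strict_of_alt (s := s) h1 h2 ?_, h5⟩).symm
    rw [h5]; decide

lemma extend_altLabel_faceSum (s : Bool) {l : List (ℕ × Bool)} (h : NoOpposite l) :
    extend (altLabel s) (faceSum l) = altLabel s l + altLabel (!s) l := by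
  let r : ℕ × Bool → ℕ × Bool → Prop := fun x y => x.1 ≤ y.1
  have : Std.Total r := ⟨fun a b => le_total _ _⟩
  have : IsTrans _ r := ⟨fun _ _ _ => le_trans⟩
  have hp := List.perm_insertionSort r l
  have hs : (l.insertionSort r).Pairwise r := List.pairwise_insertionSort r l
  set L := l.insertionSort r
  have hL : NoOpposite L := fun x hx y hy => h x (hp.subset hx) y (hp.subset hy)
  rw [extend_faceSum_perm (altLabel_perm s) hp.symm, altLabel_perm s _ _ hp.symm,
    altLabel_perm (!s) _ _ hp.symm, altLabel_of_sorted hs hL, altLabel_of_sorted hs hL,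
    ← extend_alt_faceSum, ← bd_simplex (L.map Prod.snd), ← push_simplex, ← push_bd, bd_simplex,
    ← LinearMap.comp_apply]
  refine eq_of_supp _ _ (fun l' hl' => ?_) (faceSum_mem_supp L)
  simp only [extend_simplex, LinearMap.comp_apply, push_simplex]
  exact altLabel_of_sorted (hs.sublist hl'.1)
    fun x hx y hy => hL x (hl'.1.subset hx) y (hl'.1.subset hy)

/-! ### Barycentric subdivision -/

section Subdivision

variable {E : Type*} [NormedAddCommGroup E] [NormedSpace ℝ E]

/-- The barycenter of a list of points. -/
noncomputable def bary (l : List E) : E := (l.length : ℝ)⁻¹ • l.sum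

/-- Barycentric subdivision of simplices with `n` vertices. -/
noncomputable def sdLength : ℕ → ListChain E →ₗ[ZMod 2] ListChain E
  | 0 => LinearMap.id
  | n + 1 => extend fun l => cone (bary l) (sdLength n (faceSum l))

/-- Barycentric subdivision. -/
noncomputable def sd : ListChain E →ₗ[ZMod 2] ListChain E :=
  extend fun l => sdLength l.length (simplex l)

lemma sd_nil : sd (simplex ([] : List E)) = simplex [] := by simp [sd, sdLength]

lemma sd_simplex {l : List E} (hl : l ≠ []) :
    sd (simplex l) = cone (bary l) (sd (faceSum l)) := by
  obtain ⟨n, hn⟩ : ∃ n, l.length = n + 1 :=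
    Nat.exists_eq_succ_of_ne_zero (by simpa using hl)
  rw [sd, extend_simplex, hn, sdLength, extend_simplex]
  congr 1
  refine eq_of_supp _ _ (fun l' hl' => ?_) (faceSum_mem_supp l)
  have : l'.length = n := by have := hl'.2; omega
  simp [this]

lemma bd_sd (c : ListChain E) : bd (sd c) = sd (bd c) := by
  have key : ∀ n : ℕ, ∀ l : List E, l.length = n → bd (sd (simplex l)) = sd (faceSum l) := by
    intro n
    induction n with
    | zero =>
      intro l hl
      obtain rfl : l = [] := by simpa using hl
      simp [sd_nil, faceSum]
    | succ n ih =>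
      intro l hl
      have hl' : l ≠ [] := by rintro rfl; simp at hl
      have h : bd (sd (faceSum l)) = sd (bd (faceSum l)) := by
        rw [← LinearMap.comp_apply, ← LinearMap.comp_apply (f := sd)]
        refine eq_of_supp _ _ (fun l' hl' => ?_) (faceSum_mem_supp l)
        simpa using ih l' (by have := hl'.2; omega)
      rw [sd_simplex hl', bd_cone, h, bd_faceSum]
      simp
  have : bd ∘ₗ sd = (sd : ListChain E →ₗ[ZMod 2] _) ∘ₗ bd :=
    linearMap_ext fun l => by simpa using key _ l rfl
  exact LinearMap.congr_fun this c

lemma bary_map_neg (l : List E) : bary (l.map (-·)) = -bary l := by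
  have : (l.map (-·)).sum = -l.sum := by
    induction l with
    | nil => simp
    | cons a l ih => rw [List.map_cons, List.sum_cons, ih, List.sum_cons]; abel
  simp only [bary, this, List.length_map, smul_neg]

lemma push_neg_sd (c : ListChain E) : push (-·) (sd c) = sd (push (-·) c) := by
  have key : ∀ n : ℕ, ∀ l : List E, l.length = n →
      push (-·) (sd (simplex l)) = sd (simplex (l.map (-·))) := by
    intro n
    induction n with
    | zero =>
      intro l hl
      obtain rfl : l = [] := by simpa using hl
      simp [sd_nil]
    | succ n ih =>
      intro l hl
      have hl' : l ≠ [] := by rintro rfl; simp at hl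
      have h : push (-·) (sd (faceSum l)) = sd (push (-·) (faceSum l)) := by
        rw [← LinearMap.comp_apply, ← LinearMap.comp_apply (f := sd)]
        refine eq_of_supp _ _ (fun l' hl' => ?_) (faceSum_mem_supp l)
        simpa using ih l' (by have := hl'.2; omega)
      rw [sd_simplex hl', push_cone, h, sd_simplex (by simpa using hl'), ← bd_simplex, push_bd,
        push_simplex, bd_simplex, bary_map_neg]
  have : push (-·) ∘ₗ sd = (sd : ListChain E →ₗ[ZMod 2] _) ∘ₗ push (-·) :=
    linearMap_ext fun l => by simpa using key _ l rfl
  exact LinearMap.congr_fun this c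

/-- Simplices with `n` vertices and mesh at most `δ` whose convex hull is contained in `T`. -/
def fine (T : Set E) (n : ℕ) (δ : ℝ) : Set (List E) :=
  {l | l.length = n ∧ convexHull ℝ {x | x ∈ l} ⊆ T ∧ ∀ v ∈ l, ∀ w ∈ l, dist v w ≤ δ}

lemma bary_mem_convexHull {l : List E} (hl : l ≠ []) : bary l ∈ convexHull ℝ {x | x ∈ l} := by
  have hpos : (0 : ℝ) < l.length := by exact_mod_cast List.length_pos_iff.2 hl
  have h := (convex_convexHull ℝ {x | x ∈ l}).sum_mem (t := Finset.univ)
    (w := fun _ : Fin l.length => (l.length : ℝ)⁻¹) (z := fun i => l[i])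
    (fun _ _ => by positivity) (by simp [hpos.ne'])
    (fun i _ => subset_convexHull ℝ _ (List.getElem_mem _))
  rw [← Finset.smul_sum] at h
  rw [bary]
  convert h using 2
  simp

lemma dist_bary_le {l : List E} {δ : ℝ} (h : ∀ v ∈ l, ∀ w ∈ l, dist v w ≤ δ) {v : E}
    (hv : v ∈ l) : (l.length : ℝ) * dist v (bary l) ≤ ((l.length : ℝ) - 1) * δ := by
  have hpos : (0 : ℝ) < l.length := by exact_mod_cast List.length_pos_of_mem hv
  have hsum : ∀ l' : List E, (∀ w ∈ l', dist v w ≤ δ) →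
      ‖(l'.length : ℝ) • v - l'.sum‖ ≤ l'.length * δ := by
    intro l'
    induction l' with
    | nil => simp
    | cons a l' ih =>
      intro h'
      have h1 := ih fun w hw => h' w (List.mem_cons_of_mem _ hw)
      have h2 := h' a (by simp)
      rw [dist_eq_norm] at h2
      have : ((a :: l').length : ℝ) • v - (a :: l').sum =
          (v - a) + ((l'.length : ℝ) • v - l'.sum) := by
        simp only [List.length_cons, List.sum_cons]; push_cast; module
      rw [this]
      refine (norm_add_le _ _).trans ?_
      simp only [List.length_cons]; push_cast; linarith
  obtain ⟨l₁, l₂, rfl⟩ := List.append_of_mem hv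
  have h3 := hsum (l₁ ++ l₂) fun w hw => h v hv w (by
    rcases List.mem_append.1 hw with hw | hw <;> simp [hw])
  set l := l₁ ++ v :: l₂ with hl
  have hlen : (l.length : ℝ) = (l₁ ++ l₂).length + 1 := by
    simp only [hl, List.length_append, List.length_cons]; push_cast; ring
  have h4 : (l.length : ℝ) • (v - bary l) = ((l₁ ++ l₂).length : ℝ) • v - (l₁ ++ l₂).sum := by
    rw [bary, smul_sub, smul_smul, mul_inv_cancel₀ hpos.ne', hlen]
    simp only [hl, List.sum_append, List.sum_cons]
    module
  calc (l.length : ℝ) * dist v (bary l) = ‖(l.length : ℝ) • (v - bary l)‖ := by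
        rw [norm_smul, dist_eq_norm]; simp
    _ ≤ (l₁ ++ l₂).length * δ := by rw [h4]; exact h3
    _ = _ := by rw [hlen]; ring

lemma sd_mem_fine {T : Set E} {n : ℕ} {δ θ : ℝ} (hδ : 0 ≤ δ) (hθ : (n : ℝ) / (n + 1) ≤ θ)
    {c : ListChain E} (hc : c ∈ supp (fine T n δ)) : sd c ∈ supp (fine T n (θ * δ)) := by
  refine map_mem_of_supp _ _ (fun l hl => ?_) hc
  suffices h : ∀ n : ℕ, (n : ℝ) / (n + 1) ≤ θ → ∀ l : List E, l.length = n →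
      (∀ v ∈ l, ∀ w ∈ l, dist v w ≤ δ) →
      sd (simplex l) ∈ supp (fine (convexHull ℝ {x | x ∈ l}) n (θ * δ)) by
    refine supp_mono ?_ (h n hθ l hl.1 hl.2.2)
    exact fun l' hl' => ⟨hl'.1, hl'.2.1.trans hl.2.1, hl'.2.2⟩
  clear hθ hl l hc c
  intro n
  induction n with
  | zero =>
    intro _ l hl _
    obtain rfl : l = [] := by simpa using hl
    rw [sd_nil]
    exact simplex_mem_supp (by simp [fine])
  | succ n ih =>
    intro hθ l hl hd
    have hl0 : l ≠ [] := by rintro rfl; simp at hl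
    have hn : (n : ℝ) / (n + 1) ≤ θ := by
      refine le_trans ?_ hθ
      push_cast
      rw [div_le_div_iff₀ (by positivity) (by positivity)]
      nlinarith
    have hfaces : sd (faceSum l) ∈ supp (fine (convexHull ℝ {x | x ∈ l}) n (θ * δ)) := by
      refine map_mem_of_supp _ _ (fun l' hl' => ?_) (faceSum_mem_supp l)
      refine supp_mono ?_ (ih hn l' (by have := hl'.2; omega)
        fun v hv w hw => hd v (hl'.1.subset hv) w (hl'.1.subset hw))
      exact fun l'' h => ⟨h.1, h.2.1.trans (convexHull_mono hl'.1.subset), h.2.2⟩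
    rw [sd_simplex hl0]
    refine cone_mem_supp (fun l' hl' => ?_) hfaces
    have hb := bary_mem_convexHull hl0
    have hmem : ∀ v ∈ bary l :: l', v ∈ convexHull ℝ {x | x ∈ l} := by
      intro v hv
      rcases List.mem_cons.1 hv with rfl | hv
      · exact hb
      · exact hl'.2.1 (subset_convexHull ℝ _ hv)
    have hdist : ∀ v ∈ convexHull ℝ {x | x ∈ l}, dist v (bary l) ≤ θ * δ := by
      have : convexHull ℝ {x | x ∈ l} ⊆ Metric.closedBall (bary l) (θ * δ) := by
        refine convexHull_min (fun v hv => ?_) (convex_closedBall _ _)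
        have h1 := dist_bary_le hd hv
        rw [hl] at h1
        push_cast at h1
        have h2 : dist v (bary l) ≤ (n : ℝ) / (n + 1) * δ := by
          rw [div_mul_eq_mul_div, le_div_iff₀ (by positivity)]
          linarith
        exact h2.trans (mul_le_mul_of_nonneg_right hn hδ)
      exact this
    have hθδ : 0 ≤ θ * δ := mul_nonneg (le_trans (by positivity) hn) hδ
    refine ⟨by simp [hl'.1], convexHull_min hmem (convex_convexHull _ _), ?_⟩
    intro v hv w hw
    rcases List.mem_cons.1 hv with rfl | hv'
    · rw [dist_comm]; exact hdist w (hmem w hw)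
    · rcases List.mem_cons.1 hw with rfl | hw'
      · exact hdist v (hmem v hv)
      · exact hl'.2.2 v hv' w hw'

lemma sd_iterate_mem_fine {T : Set E} {n : ℕ} {δ θ : ℝ} (hδ : 0 ≤ δ)
    (hθ : (n : ℝ) / (n + 1) ≤ θ) (N : ℕ) {c : ListChain E} (hc : c ∈ supp (fine T n δ)) :
    (sd ^ N) c ∈ supp (fine T n (θ ^ N * δ)) := by
  induction N with
  | zero => simpa using hc
  | succ N ih =>
    rw [pow_succ' sd, Module.End.mul_apply, pow_succ' θ, mul_assoc]
    have : 0 ≤ θ := le_trans (by positivity) hθ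
    exact sd_mem_fine (by positivity) hθ ih

lemma bd_sd_iterate (N : ℕ) (c : ListChain E) : bd ((sd ^ N) c) = (sd ^ N) (bd c) := by
  induction N generalizing c with
  | zero => simp
  | succ N ih => simp [pow_succ, Module.End.mul_apply, ih, bd_sd]

lemma push_neg_sd_iterate (N : ℕ) (c : ListChain E) :
    push (-·) ((sd ^ N) c) = (sd ^ N) (push (-·) c) := by
  induction N generalizing c with
  | zero => simp
  | succ N ih => simp only [pow_succ, Module.End.mul_apply, ih, push_neg_sd]

end Subdivision

/-! ### Fan's parity count -/

section Fan

variable {E : Type*} [AddCommGroup E]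

/-- The number modulo two of alternating simplices of a chain whose vertices are labelled. -/
noncomputable def altCount (lab : E → ℕ × Bool) (s : Bool) : ListChain E →ₗ[ZMod 2] ZMod 2 :=
  extend fun l => altLabel s (l.map lab)

/-- Simplices on which the labelling is odd and without opposite labels. -/
def admissible (lab : E → ℕ × Bool) : Set (List E) :=
  {l | (∀ v ∈ l, lab (-v) = flip (lab v)) ∧ NoOpposite (l.map lab)}

variable {lab : E → ℕ × Bool} {c : ListChain E}

lemma altCount_push_neg (s : Bool) (hc : c ∈ supp (admissible lab)) :
    altCount lab s (push (-·) c) = altCount lab (!s) c := by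
  rw [← LinearMap.comp_apply]
  refine eq_of_supp _ _ (fun l hl => ?_) hc
  have : (l.map (-·)).map lab = (l.map lab).map flip := by
    simpa using fun v hv => hl.1 v hv
  simp only [LinearMap.comp_apply, push_simplex, altCount, extend_simplex, this]
  rw [← altLabel_map_flip (!s), Bool.not_not]

lemma altCount_bd (s : Bool) (hc : c ∈ supp (admissible lab)) :
    altCount lab s (bd c) = altCount lab s c + altCount lab (!s) c := by
  rw [← LinearMap.comp_apply, ← LinearMap.add_apply]
  refine eq_of_supp _ _ (fun l hl => ?_) hc
  have : altCount lab s = extend (altLabel s) ∘ₗ push lab :=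
    linearMap_ext fun l => by simp [altCount]
  rw [LinearMap.comp_apply, bd_simplex, this, LinearMap.comp_apply, ← bd_simplex, push_bd,
    push_simplex, bd_simplex, extend_altLabel_faceSum s hl.2]
  simp [altCount]

lemma altCount_add_push_neg (s : Bool) (hc : c ∈ supp (admissible lab)) :
    altCount lab s (c + push (-·) c) = altCount lab s (bd c) := by
  rw [map_add, altCount_push_neg s hc, altCount_bd s hc]

lemma altCount_bd_add_push_neg (s : Bool) (hc : c ∈ supp (admissible lab)) :
    altCount lab s (bd (c + push (-·) c)) = 0 := by
  rw [map_add, ← push_bd, map_add, push_bd, altCount_bd s hc]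
  have h2 : push (-·) c ∈ supp (admissible lab) := by
    refine push_mem_supp (fun l hl => ?_) hc
    constructor
    · intro v hv
      obtain ⟨w, hw, rfl⟩ := List.mem_map.1 hv
      rw [hl.1 w hw, neg_neg, flip_flip]
    · have : (l.map (-·)).map lab = (l.map lab).map flip := by
        simpa using fun v hv => hl.1 v hv
      rw [this]
      intro x hx y hy hxy
      obtain ⟨x', hx', rfl⟩ := List.mem_map.1 hx
      obtain ⟨y', hy', rfl⟩ := List.mem_map.1 hy
      rw [hl.2 x' hx' y' hy' hxy]
  rw [altCount_bd s h2, altCount_push_neg s hc, altCount_push_neg (!s) hc, Bool.not_not,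
    add_comm (altCount lab (!s) c), ZModModule.add_self]

/-- The boundary of the cross-polytope with vertices `± p 0, …, ± p (d - 1)`. -/
noncomputable def crossPolytope (p : ℕ → E) : ℕ → ListChain E
  | 0 => simplex []
  | d + 1 => cone (p d) (crossPolytope p d) + cone (-p d) (crossPolytope p d)

lemma push_neg_crossPolytope (p : ℕ → E) (d : ℕ) :
    push (-·) (crossPolytope p d) = crossPolytope p d := by
  induction d with
  | zero => simp [crossPolytope]
  | succ d ih => simp [crossPolytope, push_cone, ih, add_comm]

lemma bd_crossPolytope (p : ℕ → E) (d : ℕ) : bd (crossPolytope p d) = 0 := by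
  induction d with
  | zero => simp [crossPolytope, faceSum]
  | succ d ih => simp [crossPolytope, bd_cone, ih, ZModModule.add_self]

lemma crossPolytope_succ (p : ℕ → E) (d : ℕ) :
    crossPolytope p (d + 1) =
      cone (p d) (crossPolytope p d) + push (-·) (cone (p d) (crossPolytope p d)) := by
  rw [push_cone, push_neg_crossPolytope, crossPolytope]

end Fan

/-- **Fan's lemma**: a subdivided cross-polytope has an odd number of alternating simplices. -/
lemma altCount_crossPolytope {E : Type*} [NormedAddCommGroup E] [NormedSpace ℝ E]
    {lab : E → ℕ × Bool} (p : ℕ → E) (N n : ℕ)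
    (h : ∀ d < n, (sd ^ N) (cone (p d) (crossPolytope p d)) ∈ supp (admissible lab)) (s : Bool) :
    altCount lab s ((sd ^ N) (crossPolytope p n)) = 1 := by
  induction n with
  | zero =>
    have : (sd ^ N) (simplex ([] : List E)) = simplex [] := by
      induction N with
      | zero => simp
      | succ N ih => rw [pow_succ, Module.End.mul_apply, sd_nil, ih fun _ h => absurd h (by simp)]
    simp [crossPolytope, this, altCount, altLabel_nil]
  | succ n ih =>
    rw [crossPolytope_succ, map_add, ← push_neg_sd_iterate, altCount_add_push_neg s (h n (by simp)),
      bd_sd_iterate, bd_cone, bd_crossPolytope, map_zero, add_zero]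
    exact ih fun d hd => h d (by omega)

end ListChain

/-! ### The intersection lemma -/

section Intersection

open ListChain

/-- A coordinate of maximal absolute value, chosen symmetrically. -/
lemma exists_dominant_coord (m : ℕ) : ∃ D : (Fin (m + 1) → ℝ) → Fin (m + 1),
    (∀ x : Fin (m + 1) → ℝ, |x (D x)| = ‖x‖) ∧ ∀ x, D (-x) = D x := by
  have h : ∀ x : Fin (m + 1) → ℝ, ∃ i, |x i| = ‖x‖ := by
    intro x
    obtain ⟨i, -, hi⟩ := Finset.exists_mem_eq_sup' Finset.univ_nonempty fun i => |x i|
    refine ⟨i, le_antisymm (norm_le_pi_norm x i) ((pi_norm_le_iff_of_nonneg (abs_nonneg _)).2 ?_)⟩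
    intro j
    rw [← hi]
    exact Finset.le_sup' (fun i => |x i|) (Finset.mem_univ j)
  choose J hJ using h
  refine ⟨fun x => J fun i => |x i|, fun x => ?_, fun x => by simp⟩
  have h1 := hJ fun i => |x i|
  rw [abs_abs] at h1
  rw [h1]
  simp [Pi.norm_def]

/-- The label of a vector: its dominant coordinate with its sign. -/
noncomputable def coordLabel {m : ℕ} (D : (Fin (m + 1) → ℝ) → Fin (m + 1))
    (x : Fin (m + 1) → ℝ) : ℕ × Bool :=
  (D x, decide (0 < x (D x)))

lemma coordLabel_neg {m : ℕ} {D : (Fin (m + 1) → ℝ) → Fin (m + 1)} 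
    (hD : ∀ x : Fin (m + 1) → ℝ, |x (D x)| = ‖x‖)
    (hD' : ∀ x, D (-x) = D x) {x : Fin (m + 1) → ℝ} (hx : x ≠ 0) :
    coordLabel D (-x) = ListChain.flip (coordLabel D x) := by
  have h : x (D x) ≠ 0 := by
    rw [← abs_pos, hD]; exact norm_pos_iff.2 hx
  simp only [coordLabel, ListChain.flip, hD', Pi.neg_apply, Prod.mk.injEq, true_and]
  rcases h.lt_or_gt with h | h <;> simp [h, h.le]

lemma coordLabel_eq {m : ℕ} {D : (Fin (m + 1) → ℝ) → Fin (m + 1)} 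
    (hD : ∀ x : Fin (m + 1) → ℝ, |x (D x)| = ‖x‖)
    {x y : Fin (m + 1) → ℝ} {δ : ℝ} (hx : δ ≤ ‖x‖) (hxy : ‖x - y‖ < δ)
    (h : (coordLabel D x).1 = (coordLabel D y).1) : coordLabel D x = coordLabel D y := by
  have h1 : D x = D y := Fin.ext h
  refine Prod.ext h ?_
  have h2 := norm_le_pi_norm (x - y) (D x)
  rw [← hD] at hx
  simp only [Pi.sub_apply, Real.norm_eq_abs] at h2
  simp only [coordLabel, ← h1, decide_eq_decide]
  have h3 := abs_lt.1 (h2.trans_lt hxy)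
  rcases le_or_gt (x (D x)) 0 with h4 | h4
  · rw [abs_of_nonpos h4] at hx
    constructor <;> intro <;> linarith
  · rw [abs_of_pos h4] at hx
    constructor <;> intro <;> linarith

/-- The vertices of the cross-polytope of size `R`. -/
noncomputable def vertex (n : ℕ) (R : ℝ) (d : ℕ) : Fin n → ℝ := fun i => if (i : ℕ) = d then R else 0

/-- Simplices of a face of the cross-polytope of size `R` using the first `d` axes. -/
def facets (n : ℕ) (R : ℝ) (d : ℕ) : Set (List (Fin n → ℝ)) :=
  {l | l.length = d ∧ ∃ s : Fin n → ℝ, (∀ i, |s i| = 1) ∧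
    ∀ v ∈ l, ‖v‖ ≤ R ∧ ∑ i, s i * v i = R ∧ ∀ i : Fin n, d ≤ i → v i = 0}

lemma cons_mem_facets {n : ℕ} {R : ℝ} (hR : 0 ≤ R) {d : ℕ} (hd : d < n) {ε : ℝ} (hε : |ε| = 1)
    {l : List (Fin n → ℝ)} (hl : l ∈ facets n R d) :
    (ε • vertex n R d) :: l ∈ facets n R (d + 1) := by
  obtain ⟨hlen, s, hs, hl⟩ := hl
  have hε2 : ε * ε = 1 := by rw [← abs_mul_abs_self, hε, one_mul]
  refine ⟨by simp [hlen], Function.update s ⟨d, hd⟩ ε, fun i => ?_, fun v hv => ?_⟩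
  · by_cases h : i = ⟨d, hd⟩
    · subst h; simpa using hε
    · simpa [h] using hs i
  · rcases List.mem_cons.1 hv with rfl | hv
    · refine ⟨?_, ?_, ?_⟩
      · rw [pi_norm_le_iff_of_nonneg hR]
        intro i
        by_cases h : (i : ℕ) = d <;> simp [vertex, h, hε, abs_of_nonneg hR, hR]
      · rw [Finset.sum_eq_single ⟨d, hd⟩]
        · simp [vertex, ← mul_assoc, hε2]
        · intro i _ hi
          have : (i : ℕ) ≠ d := fun h => hi (Fin.ext h)
          simp [vertex, this]
        · simp
      · intro i hi
        have : (i : ℕ) ≠ d := by omega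
        simp [vertex, this]
    · obtain ⟨h1, h2, h3⟩ := hl v hv
      refine ⟨h1, ?_, fun i hi => h3 i (by omega)⟩
      rw [← h2]
      refine Finset.sum_congr rfl fun i _ => ?_
      by_cases h : i = ⟨d, hd⟩
      · subst h; simp [h3]
      · simp [h]

lemma cone_crossPolytope_mem_facets {n : ℕ} {R : ℝ} (hR : 0 ≤ R) {d : ℕ} (hd : d < n) :
    cone (vertex n R d) (crossPolytope (vertex n R) d) ∈ supp (facets n R (d + 1)) := by
  have hpos : ∀ l ∈ facets n R d, vertex n R d :: l ∈ facets n R (d + 1) := fun l hl => by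
    simpa using cons_mem_facets hR hd (ε := 1) (by simp) hl
  refine cone_mem_supp hpos ?_
  clear hpos
  induction d with
  | zero => exact simplex_mem_supp ⟨rfl, 1, by simp, by simp⟩
  | succ d ih =>
    refine add_mem (cone_mem_supp (fun l hl => ?_) (ih (by omega)))
      (cone_mem_supp (fun l hl => ?_) (ih (by omega)))
    · simpa using cons_mem_facets hR (by omega) (ε := 1) (by simp) hl
    · simpa using cons_mem_facets hR (by omega) (ε := -1) (by simp) hl

lemma facets_subset_fine {n : ℕ} {R : ℝ} {d : ℕ} :
    facets n R d ⊆ fine {x : Fin n → ℝ | ‖x‖ ≤ R ∧ R ≤ ∑ i, |x i|} d (2 * R) := by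
  rintro l ⟨hlen, s, hs, hl⟩
  refine ⟨hlen, ?_, fun v hv w hw => ?_⟩
  · have hlin : IsLinearMap ℝ fun x : Fin n → ℝ => ∑ i, s i * x i :=
      ⟨fun x y => by simp [mul_add, Finset.sum_add_distrib],
        fun c x => by simp only [Pi.smul_apply, smul_eq_mul, Finset.mul_sum, mul_left_comm]⟩
    have hsub : convexHull ℝ {x | x ∈ l} ⊆
        Metric.closedBall (0 : Fin n → ℝ) R ∩ {x | ∑ i, s i * x i = R} :=
      convexHull_min (fun v hv => ⟨by simpa using (hl v hv).1, (hl v hv).2.1⟩)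
        ((convex_closedBall _ _).inter (convex_hyperplane hlin R))
    intro x hx
    obtain ⟨h1, h2⟩ := hsub hx
    refine ⟨by simpa using h1, ?_⟩
    rw [← show ∑ i, s i * x i = R from h2]
    refine Finset.sum_le_sum fun i _ => (le_abs_self _).trans ?_
    rw [abs_mul, hs, one_mul]
  · have h1 := (hl v hv).1
    have h2 := (hl w hw).1
    rw [dist_eq_norm]
    linarith [norm_sub_le v w]

lemma exists_zero_of_odd_of_even {m : ℕ} {h : (Fin (m + 2) → ℝ) → Fin (m + 1) → ℝ}
    {q : (Fin (m + 2) → ℝ) → ℝ} (hh : Continuous h) (hq : Continuous q)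
    (hodd : ∀ x, h (-x) = -h x) (heven : ∀ x, q (-x) = q x) (hq0 : q 0 < 0) {R : ℝ} (hR : 0 ≤ R)
    (hqR : ∀ x, R ≤ ∑ i, |x i| → 0 ≤ q x) : ∃ x, h x = 0 ∧ q x = 0 := by
  by_contra! hcon
  set K := Metric.closedBall (0 : Fin (m + 2) → ℝ) R with hK
  have hKc : IsCompact K := isCompact_closedBall _ _
  -- the functions have no common zero, quantitatively
  obtain ⟨η, hη, hηK⟩ : ∃ η > 0, ∀ x ∈ K, |q x| < 2 * η → 2 * η ≤ ‖h x‖ := by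
    obtain ⟨x₀, -, hx₀⟩ := hKc.exists_isMinOn (f := fun x => max ‖h x‖ |q x|)
      ⟨0, by simpa [hK] using hR⟩ (by fun_prop)
    have hpos : 0 < max ‖h x₀‖ |q x₀| := by
      by_cases hx : h x₀ = 0
      · exact lt_max_of_lt_right (abs_pos.2 (hcon x₀ hx))
      · exact lt_max_of_lt_left (norm_pos_iff.2 hx)
    refine ⟨max ‖h x₀‖ |q x₀| / 2, by positivity, fun x hx hqx => ?_⟩
    have h1 : max ‖h x₀‖ |q x₀| ≤ max ‖h x‖ |q x| := hx₀ hx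
    rcases le_max_iff.1 h1 with h2 | h2 <;> linarith
  obtain ⟨δ₀, hδ₀, hqδ₀⟩ : ∃ δ₀ > 0, ∀ x, 0 ≤ q x → δ₀ ≤ ‖x‖ := by
    obtain ⟨δ₀, hδ₀, hb⟩ := Metric.eventually_nhds_iff.1 (hq.continuousAt.eventually_lt_const hq0)
    refine ⟨δ₀, hδ₀, fun x hx => not_lt.1 fun hlt => ?_⟩
    exact absurd (hb (by simpa using hlt)) (not_lt.2 hx)
  obtain ⟨δ₁, hδ₁, hhδ₁⟩ := Metric.uniformContinuousOn_iff.1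
    (hKc.uniformContinuousOn_of_continuous hh.continuousOn) η hη
  obtain ⟨δ₂, hδ₂, hqδ₂⟩ := Metric.uniformContinuousOn_iff.1
    (hKc.uniformContinuousOn_of_continuous hq.continuousOn) η hη
  set δ := min δ₀ (min δ₁ δ₂) / 2 with hδdef
  have hδ : 0 < δ := by positivity
  have hδlt : δ < min δ₀ (min δ₁ δ₂) := half_lt_self (by positivity)
  obtain ⟨hδ0, hδ1, hδ2⟩ : δ < δ₀ ∧ δ < δ₁ ∧ δ < δ₂ := by simpa using hδlt
  -- the labelling
  obtain ⟨D, hD, hD'⟩ := exists_dominant_coord m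
  obtain ⟨F, hF, hF'⟩ := exists_dominant_coord (m + 1)
  let lab : (Fin (m + 2) → ℝ) → ℕ × Bool := fun v =>
    if q v < η then coordLabel D (h v) else
      (m + 1 + (coordLabel F v).1, (coordLabel F v).2)
  have hlab1 : ∀ v, q v < η → lab v = coordLabel D (h v) := fun v hv => if_pos hv
  have hlab2 : ∀ v, ¬ q v < η → lab v = (m + 1 + (coordLabel F v).1, (coordLabel F v).2) :=
    fun v hv => if_neg hv
  have hsmall : ∀ v, q v < η → (lab v).1 < m + 1 := fun v hv => by
    rw [hlab1 v hv]; exact (D (h v)).2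
  have hbig : ∀ v, ¬ q v < η → m + 1 ≤ (lab v).1 := fun v hv => by
    rw [hlab2 v hv]; simp
  have hadm : ∀ l : List (Fin (m + 2) → ℝ), (∀ v ∈ l, v ∈ K ∧ 0 ≤ q v) →
      (∀ v ∈ l, ∀ w ∈ l, dist v w ≤ δ) → l ∈ admissible lab := by
    intro l hl hd
    constructor
    · intro v hv
      obtain ⟨hvK, hqv⟩ := hl v hv
      by_cases hv' : q v < η
      · have h0 : h v ≠ 0 := by
          have := hηK v hvK (by rw [abs_of_nonneg hqv]; linarith)
          exact norm_pos_iff.1 (by linarith)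
        rw [hlab1 v hv', hlab1 (-v) (by rwa [heven]), hodd, coordLabel_neg hD hD' h0]
      · have h0 : v ≠ 0 := norm_pos_iff.1 (hδ₀.trans_le (hqδ₀ v hqv))
        rw [hlab2 v hv', hlab2 (-v) (by rwa [heven]), coordLabel_neg hF hF' h0]
        rfl
    · intro x hx y hy hxy
      obtain ⟨v, hv, rfl⟩ := List.mem_map.1 hx
      obtain ⟨w, hw, rfl⟩ := List.mem_map.1 hy
      obtain ⟨hvK, hqv⟩ := hl v hv
      obtain ⟨hwK, hqw⟩ := hl w hw
      have hvw := hd v hv w hw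
      by_cases hv' : q v < η <;> by_cases hw' : q w < η
      · rw [hlab1 v hv', hlab1 w hw'] at hxy ⊢
        refine coordLabel_eq hD (δ := η) ?_ ?_ hxy
        · have := hηK v hvK (by rw [abs_of_nonneg hqv]; linarith)
          linarith
        · rw [← dist_eq_norm]
          exact hhδ₁ v hvK w hwK (by linarith)
      · have := hsmall v hv'; have := hbig w hw'; omega
      · have := hbig v hv'; have := hsmall w hw'; omega
      · rw [hlab2 v hv', hlab2 w hw'] at hxy ⊢
        have h1 : (coordLabel F v).1 = (coordLabel F w).1 := by simpa using hxy
        rw [coordLabel_eq hF (hqδ₀ v hqv) (by rw [← dist_eq_norm]; linarith) h1]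
  -- the subdivision
  set p := vertex (m + 2) R
  set θ : ℝ := (((m + 2 : ℕ) : ℝ) + 1) / (((m + 2 : ℕ) : ℝ) + 2) with hθ
  have hθ0 : 0 ≤ θ := by positivity
  have hθd : ∀ d : ℕ, d ≤ (m + 2) + 1 → (d : ℝ) / (d + 1) ≤ θ := by
    intro d hd
    have : (d : ℝ) ≤ ((m + 2 : ℕ) : ℝ) + 1 := by exact_mod_cast hd
    rw [hθ, div_le_div_iff₀ (by positivity) (by positivity)]
    linarith
  obtain ⟨N, hN⟩ : ∃ N : ℕ, θ ^ N * (2 * R) ≤ δ := by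
    have hθ1 : θ < 1 := by rw [hθ, div_lt_one (by positivity)]; linarith
    have := (tendsto_pow_atTop_nhds_zero_of_lt_one hθ0 hθ1).mul_const (2 * R)
    rw [zero_mul] at this
    exact (this.eventually_le_const hδ).exists
  have hsphere : ∀ d < (m + 2), (sd ^ N) (cone (p d) (crossPolytope p d)) ∈ supp (admissible lab) := by
    intro d hd
    have h1 := supp_mono facets_subset_fine (cone_crossPolytope_mem_facets hR hd)
    refine supp_mono ?_ (sd_iterate_mem_fine (by positivity) (hθd (d + 1) (by omega)) N h1)
    intro l hl
    refine hadm l (fun v hv => ?_) fun v hv w hw => (hl.2.2 v hv w hw).trans hN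
    have h2 := hl.2.1 (subset_convexHull ℝ _ hv)
    exact ⟨by simpa [hK] using h2.1, hqR v h2.2⟩
  have hfan := altCount_crossPolytope p N (m + 2) hsphere true
  -- half of the ball
  set B := (sd ^ N) (cone 0 (cone (p (m + 1)) (crossPolytope p (m + 1)))) with hB
  have hBK : B ∈ supp (fine K ((m + 2) + 1) δ) := by
    have h1 : cone 0 (cone (p (m + 1)) (crossPolytope p (m + 1))) ∈
        supp (fine K ((m + 2) + 1) (2 * R)) := by
      refine cone_mem_supp (fun l hl => ?_) (cone_crossPolytope_mem_facets hR (by omega))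
      obtain ⟨hlen, s, hs, hl⟩ := hl
      have hmem : ∀ v ∈ 0 :: l, ‖v‖ ≤ R := by
        intro v hv
        rcases List.mem_cons.1 hv with rfl | hv
        · simpa using hR
        · exact (hl v hv).1
      refine ⟨by simp [hlen], convexHull_min (fun v hv => by simpa [hK] using hmem v hv)
        (convex_closedBall _ _), fun v hv w hw => ?_⟩
      rw [dist_eq_norm]
      linarith [norm_sub_le v w, hmem v hv, hmem w hw]
    refine supp_mono ?_ (sd_iterate_mem_fine (by positivity) (hθd ((m + 2) + 1) le_rfl) N h1)
    exact fun l hl => ⟨hl.1, hl.2.1, fun v hv w hw => (hl.2.2 v hv w hw).trans hN⟩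
  have hBbd : bd (B + push (-·) B) = (sd ^ N) (crossPolytope p (m + 2)) := by
    rw [hB, push_neg_sd_iterate, ← map_add, bd_sd_iterate, push_cone, neg_zero, ← map_add,
      ← crossPolytope_succ, bd_cone, bd_crossPolytope, map_zero, add_zero]
  -- split the half ball according to whether `q` is nonnegative on the vertices
  obtain ⟨B₁, B₂, hB12, hB₁, hB₂⟩ : ∃ B₁ B₂, B = B₁ + B₂ ∧
      B₁ ∈ supp (fine K ((m + 2) + 1) δ ∩ {l | ∀ v ∈ l, 0 ≤ q v}) ∧
      B₂ ∈ supp (fine K ((m + 2) + 1) δ ∩ {l | ∃ v ∈ l, q v < 0}) := by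
    have : B ∈ supp (fine K ((m + 2) + 1) δ ∩ {l | ∀ v ∈ l, 0 ≤ q v}) ⊔
        supp (fine K ((m + 2) + 1) δ ∩ {l | ∃ v ∈ l, q v < 0}) := by
      rw [supp, supp, ← Finsupp.supported_union]
      refine supp_mono (fun l hl => ?_) hBK
      by_cases hl' : ∀ v ∈ l, 0 ≤ q v
      · exact Or.inl ⟨hl, hl'⟩
      · push Not at hl'
        exact Or.inr ⟨hl, hl'⟩
    obtain ⟨y, hy, z, hz, hyz⟩ := Submodule.mem_sup.1 this
    exact ⟨y, z, hyz.symm, hy, hz⟩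
  have hzero₁ : altCount lab true (bd (B₁ + push (-·) B₁)) = 0 := by
    refine altCount_bd_add_push_neg true (supp_mono ?_ hB₁)
    rintro l ⟨hl, hl'⟩
    exact hadm l (fun v hv => ⟨hl.2.1 (subset_convexHull ℝ _ hv), hl' v hv⟩) hl.2.2
  have hzero₂ : altCount lab true (bd (B₂ + push (-·) B₂)) = 0 := by
    have h1 : B₂ ∈ supp {l | l.length = (m + 2) + 1 ∧ ∀ v ∈ l, q v < η} := by
      refine supp_mono ?_ hB₂
      rintro l ⟨hl, w, hw, hqw⟩
      refine ⟨hl.1, fun v hv => ?_⟩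
      have := hqδ₂ v (hl.2.1 (subset_convexHull ℝ _ hv)) w (hl.2.1 (subset_convexHull ℝ _ hw))
        (by linarith [hl.2.2 v hv w hw])
      rw [Real.dist_eq] at this
      linarith [(abs_lt.1 this).2]
    have h2 : push (-·) B₂ ∈ supp {l | l.length = (m + 2) + 1 ∧ ∀ v ∈ l, q v < η} := by
      refine push_mem_supp (fun l hl => ?_) h1
      refine ⟨by simpa using hl.1, fun v hv => ?_⟩
      obtain ⟨w, hw, rfl⟩ := List.mem_map.1 hv
      rw [heven]; exact hl.2 w hw
    have h3 : bd (B₂ + push (-·) B₂) ∈ supp {l | l.length = (m + 2) ∧ ∀ v ∈ l, q v < η} := by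
      refine bd_mem_supp ?_ (add_mem h1 h2)
      intro l hl l' hl' hlen
      exact ⟨by have := hl.1; omega, fun v hv => hl.2 v (hl'.subset hv)⟩
    refine eq_of_supp (altCount lab true) 0 (fun l hl => ?_) h3
    rw [altCount, extend_simplex]
    refine altLabel_eq_zero (k := m + 1) (fun x hx => ?_) (by simp [hl.1])
    obtain ⟨v, hv, rfl⟩ := List.mem_map.1 hx
    exact hsmall v (hl.2 v hv)
  have hsum : B + push (-·) B = (B₁ + push (-·) B₁) + (B₂ + push (-·) B₂) := by
    rw [hB12, map_add]; abel
  rw [← hBbd, hsum, map_add, map_add, hzero₁, hzero₂] at hfan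
  exact absurd hfan (by decide)

end Intersection

/-- The radial retraction of a normed space onto a closed ball around the origin. -/
noncomputable def radialRetraction {Y : Type*} [NormedAddCommGroup Y] [NormedSpace ℝ Y] {ρ : ℝ}
    (hρ : 0 < ρ) (y : Y) : Metric.closedBall (0 : Y) ρ :=
  ⟨(ρ / max ρ ‖y‖) • y, by
    have h : 0 < max ρ ‖y‖ := lt_max_of_lt_left hρ
    rw [mem_closedBall_zero_iff, norm_smul, Real.norm_of_nonneg (by positivity), div_mul_eq_mul_div,
      div_le_iff₀ h]
    gcongr
    exact le_max_right _ _⟩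

section Intersection

variable {X Y : Type*} [NormedAddCommGroup X] [NormedSpace ℝ X]
  [NormedAddCommGroup Y] [NormedSpace ℝ Y] {ρ : ℝ}

lemma continuous_radialRetraction (hρ : 0 < ρ) : Continuous (radialRetraction (Y := Y) hρ) := by
  refine Continuous.subtype_mk ?_ _
  refine Continuous.smul (Continuous.div (by fun_prop) (by fun_prop) fun y => ?_) continuous_id
  exact (lt_max_of_lt_left hρ).ne'

lemma radialRetraction_neg (hρ : 0 < ρ) (y : Y) :
    radialRetraction hρ (-y) = -radialRetraction hρ y := by
  ext; simp [radialRetraction]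

lemma norm_radialRetraction (hρ : 0 < ρ) {y : Y} (hy : ρ ≤ ‖y‖) :
    ‖(radialRetraction hρ y : Y)‖ = ρ := by
  have : 0 < ‖y‖ := hρ.trans_le hy
  simp only [radialRetraction, max_eq_right hy]
  rw [norm_smul, Real.norm_of_nonneg (by positivity)]
  field_simp

/-- An odd map on a ball of an `(m + 2)`-dimensional space meets every small sphere of a closed
subspace of codimension at most `m + 1`, provided it maps the boundary outside that sphere. -/
lemma exists_mem_norm_eq_of_odd [FiniteDimensional ℝ Y] {m : ℕ} (hY : Module.finrank ℝ Y = m + 2)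
    {Z : Submodule ℝ X} (hZ : IsClosed (Z : Set X)) [FiniteDimensional ℝ (X ⧸ Z)]
    (hcodim : Module.finrank ℝ (X ⧸ Z) ≤ m + 1) {r : ℝ} (hr : 0 < r) (hρ : 0 < ρ)
    (γ : C(Metric.closedBall (0 : Y) ρ, X)) (hodd : ∀ u, γ (-u) = -γ u)
    (hbdry : ∀ u : Metric.closedBall (0 : Y) ρ, ‖(u : Y)‖ = ρ → r ≤ ‖γ u‖) :
    ∃ u, γ u ∈ Z ∧ ‖γ u‖ = r := by
  have : IsClosed (Z : Set X) := hZ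
  obtain ⟨J, hJ⟩ := (finrank_le_iff_exists_linearMap (R := ℝ) (M := X ⧸ Z)
    (M' := Fin (m + 1) → ℝ)).1 (by simpa using hcodim)
  have hJc : Continuous J := J.continuous_of_finiteDimensional
  have hmk : Continuous Z.mkQ := Z.isOpenQuotientMap_mkQ.continuous
  let T : (Fin (m + 2) → ℝ) ≃L[ℝ] Y := ContinuousLinearEquiv.ofFinrankEq (by simp [hY])
  obtain ⟨C, hC, hCT⟩ := (T.symm : Y →L[ℝ] (Fin (m + 2) → ℝ)).bound
  have hg : Continuous fun x => γ (radialRetraction hρ (T x)) :=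
    γ.continuous.comp ((continuous_radialRetraction hρ).comp T.continuous)
  have hgodd : ∀ x, γ (radialRetraction hρ (T (-x))) = -γ (radialRetraction hρ (T x)) := by
    intro x
    rw [map_neg, radialRetraction_neg, hodd]
  have hg0 : γ (radialRetraction hρ (T 0)) = 0 := by
    have := hgodd 0
    rw [neg_zero] at this
    rw [eq_neg_iff_add_eq_zero, ← two_smul ℝ] at this
    exact (smul_eq_zero.1 this).resolve_left two_ne_zero
  obtain ⟨x, hx, hx'⟩ := exists_zero_of_odd_of_even
    (h := fun x => J (Z.mkQ (γ (radialRetraction hρ (T x)))))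
    (q := fun x => ‖γ (radialRetraction hρ (T x))‖ - r)
    (hJc.comp (hmk.comp hg)) (hg.norm.sub continuous_const)
    (fun x => by simp only [hgodd]; rw [map_neg, map_neg]) (fun x => by simp only [hgodd, norm_neg])
    (by simp only [hg0]; simpa using hr) (R := (m + 2 : ℕ) * (C * ρ)) (by positivity) (fun x hx => by
      refine sub_nonneg.2 (hbdry _ (norm_radialRetraction hρ ?_))
      have h1 : ∑ i, |x i| ≤ (m + 2 : ℕ) * ‖x‖ := by
        simpa using Finset.sum_le_card_nsmul Finset.univ (fun i => |x i|) ‖x‖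
          (fun i _ => norm_le_pi_norm x i)
      have h2 : ‖x‖ ≤ C * ‖T x‖ := by simpa using hCT (T x)
      have h3 : C * ρ ≤ ‖x‖ := le_of_mul_le_mul_left (hx.trans h1) (by positivity)
      exact le_of_mul_le_mul_left (h3.trans h2) hC)
  refine ⟨radialRetraction hρ (T x), ?_, sub_eq_zero.1 hx'⟩
  exact (Submodule.Quotient.mk_eq_zero Z).1 (hJ (by simpa using hx))

end Intersection

section SchauderBasis

variable {X : Type*} [NormedAddCommGroup X] [NormedSpace ℝ X] {e : ℕ → X}

lemma linearIndependent_of_unique_expansion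
    (he : ∀ x : X, ∃! a : ℕ → ℝ,
      Tendsto (fun n => ∑ j ∈ Finset.range n, a j • e j) atTop (𝓝 x)) :
    LinearIndependent ℝ e := by
  rw [linearIndependent_iff]
  intro l hl
  obtain ⟨a, -, ha⟩ := he 0
  have h0 : (0 : ℕ → ℝ) = a := ha 0 (by simp)
  have hl' : (l : ℕ → ℝ) = a := by
    refine ha l (tendsto_const_nhds.congr' ?_)
    filter_upwards [eventually_ge_atTop (l.support.sup id + 1)] with n hn
    rw [← hl, Finsupp.linearCombination_apply, Finsupp.sum]
    refine Finset.sum_subset (fun j hj => ?_) (fun j _ hj => ?_)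
    · have := Finset.le_sup (f := id) hj
      simp only [id] at this
      exact Finset.mem_range.2 (by omega)
    · simp [Finsupp.notMem_support_iff.1 hj]
  exact DFunLike.coe_injective (hl'.trans h0.symm)

lemma finrank_span_image_Iio (he : LinearIndependent ℝ e) (n : ℕ) :
    Module.finrank ℝ (Submodule.span ℝ (e '' Set.Iio n)) = n := by
  have h := finrank_span_eq_card (he.comp (Fin.val : Fin n → ℕ) Fin.val_injective)
  have hr : Set.range (e ∘ (Fin.val : Fin n → ℕ)) = e '' Set.Iio n := by
    rw [Set.range_comp]
    congr 1
    ext j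
    simp
  rwa [hr, Fintype.card_fin] at h

lemma span_mkQ_eq_top
    (he : ∀ x : X, ∃ a : ℕ → ℝ,
      Tendsto (fun n => ∑ j ∈ Finset.range n, a j • e j) atTop (𝓝 x)) (k : ℕ) :
    Submodule.span ℝ (Set.range fun j : Fin k =>
      (Submodule.span ℝ (e '' Set.Ici k)).topologicalClosure.mkQ (e j)) = ⊤ := by
  set Z := (Submodule.span ℝ (e '' Set.Ici k)).topologicalClosure
  rw [eq_top_iff]
  rintro y -
  obtain ⟨x, rfl⟩ := Z.mkQ_surjective y
  obtain ⟨a, ha⟩ := he x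
  have hmem : x - ∑ j ∈ Finset.range k, a j • e j ∈ Z := by
    refine mem_closure_of_tendsto (ha.sub_const _) ?_
    filter_upwards [eventually_ge_atTop k] with n hn
    rw [← Finset.sum_range_add_sum_Ico _ hn, add_sub_cancel_left]
    refine Submodule.sum_mem _ fun j hj => Submodule.smul_mem _ _ (Submodule.subset_span ?_)
    exact ⟨j, (Finset.mem_Ico.1 hj).1, rfl⟩
  have hx : Z.mkQ x = ∑ j ∈ Finset.range k, a j • Z.mkQ (e j) := by
    have h := (Submodule.Quotient.mk_eq_zero Z).2 hmem
    rw [← Submodule.mkQ_apply, map_sub, sub_eq_zero] at h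
    simpa using h
  rw [hx]
  refine Submodule.sum_mem _ fun j hj => Submodule.smul_mem _ _ (Submodule.subset_span ?_)
  exact ⟨⟨j, Finset.mem_range.1 hj⟩, rfl⟩

end SchauderBasis

/-- **Ekeland's variational principle**. -/
lemma LowerSemicontinuous.exists_ekeland {α : Type*} [MetricSpace α] [CompleteSpace α] {Φ : α → ℝ}
    (hΦ : LowerSemicontinuous Φ) (hbdd : BddBelow (Set.range Φ)) {ε : ℝ} (hε : 0 < ε) (x₀ : α) :
    ∃ x, Φ x ≤ Φ x₀ ∧ ∀ y, Φ x - ε * dist x y ≤ Φ y := by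
  let S : α → Set α := fun x => {y | Φ y + ε * dist x y ≤ Φ x}
  have hself : ∀ x, x ∈ S x := fun x => by simp [S]
  have htrans : ∀ {x y z}, y ∈ S x → z ∈ S y → z ∈ S x := by
    intro x y z hy hz
    simp only [S, Set.mem_ofPred_eq] at *
    nlinarith [dist_triangle x y z]
  have hclosed : ∀ x, IsClosed (S x) := fun x =>
    (hΦ.add (Continuous.lowerSemicontinuous (by fun_prop : Continuous fun y => ε * dist x y)))
      |>.isClosed_preimage (Φ x)
  have hmin : ∀ (n : ℕ) (x : α), ∃ y ∈ S x, ∀ z ∈ S x, Φ y ≤ Φ z + (1 / 2) ^ n := by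
    intro n x
    have hb : BddBelow (Φ '' S x) := hbdd.mono (Set.image_subset_range _ _)
    obtain ⟨_, ⟨y, hy, rfl⟩, hlt⟩ := exists_lt_of_csInf_lt (s := Φ '' S x) ⟨_, x, hself x, rfl⟩
      (lt_add_of_pos_right _ (by positivity : (0 : ℝ) < (1 / 2) ^ n))
    exact ⟨y, hy, fun z hz => by linarith [csInf_le hb ⟨z, hz, rfl⟩]⟩
  choose f hfS hf using hmin
  let x : ℕ → α := fun n => Nat.rec x₀ (fun n y => f n y) n
  have hx : ∀ n, x (n + 1) = f n (x n) := fun n => rfl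
  have hmem : ∀ n k, x (n + k) ∈ S (x n) := by
    intro n k
    induction k with
    | zero => exact hself _
    | succ k ih => exact htrans ih (by rw [← add_assoc, hx]; exact hfS _ _)
  have hdist : ∀ n, ∀ y ∈ S (x (n + 1)), ε * dist (x (n + 1)) y ≤ (1 / 2) ^ n := by
    intro n y hy
    have h1 : Φ (x (n + 1)) ≤ Φ y + (1 / 2) ^ n := by
      rw [hx]
      exact hf n (x n) y (htrans (hmem n 1) hy)
    have h2 : Φ y + ε * dist (x (n + 1)) y ≤ Φ (x (n + 1)) := hy
    linarith
  have hlim : Tendsto (fun n : ℕ => (1 / 2 : ℝ) ^ n / ε) atTop (𝓝 0) := by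
    simpa using (tendsto_pow_atTop_nhds_zero_of_lt_one (r := (1 / 2 : ℝ)) (by norm_num)
      (by norm_num)).div_const ε
  have hcauchy : CauchySeq fun n => x (n + 1) := by
    refine cauchySeq_of_le_tendsto_0 (fun n => 2 * ((1 / 2 : ℝ) ^ n / ε)) ?_
      (by simpa using hlim.const_mul 2)
    intro n k N hn hk
    have key : ∀ i, N ≤ i → dist (x (N + 1)) (x (i + 1)) ≤ (1 / 2 : ℝ) ^ N / ε := by
      intro i hi
      obtain ⟨j, rfl⟩ := Nat.exists_eq_add_of_le hi
      rw [le_div_iff₀' hε]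
      refine hdist N _ ?_
      rw [show N + j + 1 = N + 1 + j by ring]
      exact hmem _ _
    have h := dist_triangle_left (x (n + 1)) (x (k + 1)) (x (N + 1))
    linarith [key n hn, key k hk]
  obtain ⟨z, hz⟩ := cauchySeq_tendsto_of_complete hcauchy
  have hzS : ∀ n, z ∈ S (x n) := by
    intro n
    refine (hclosed _).mem_of_tendsto hz ?_
    filter_upwards [eventually_ge_atTop n] with k hk
    obtain ⟨j, hj⟩ := Nat.exists_eq_add_of_le (hk.trans (Nat.le_succ k))
    rw [Nat.succ_eq_add_one] at hj
    rw [hj]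
    exact hmem _ _
  refine ⟨z, ?_, fun y => ?_⟩
  · have h : Φ z + ε * dist x₀ z ≤ Φ x₀ := hzS 0
    nlinarith [dist_nonneg (x := x₀) (y := z)]
  · by_contra! hy
    have hyS : y ∈ S z := by
      simp only [S, Set.mem_ofPred_eq]; linarith
    have hzy : Tendsto (fun n => x (n + 1)) atTop (𝓝 y) := by
      rw [tendsto_iff_dist_tendsto_zero]
      refine squeeze_zero (fun _ => dist_nonneg) (fun n => ?_) hlim
      rw [le_div_iff₀' hε]
      exact hdist n y (htrans (hzS (n + 1)) hyS)
    rw [tendsto_nhds_unique hz hzy] at hy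
    simp at hy

section MinMax

variable {X : Type*} [NormedAddCommGroup X] [NormedSpace ℝ X] {L : X → ℝ} {dL : X → X →L[ℝ] ℝ}

lemma fderiv_neg_of_even (hderiv : ∀ x, HasFDerivAt L (dL x) x) (heven : ∀ x, L (-x) = L x)
    (x : X) : dL (-x) = -dL x := by
  have h1 : HasFDerivAt L (dL x ∘L (-ContinuousLinearMap.id ℝ X)) (-x) := by
    have h2 : HasFDerivAt (fun y : X => -y) (-ContinuousLinearMap.id ℝ X) (-x) :=
      (hasFDerivAt_id (-x)).neg
    have h3 : HasFDerivAt L (dL x) (-(-x)) := by rw [neg_neg]; exact hderiv x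
    have h4 := h3.comp (-x) h2
    exact h4.congr_of_eventuallyEq (Eventually.of_forall fun y => (heven y).symm)
  rw [(hderiv (-x)).unique h1]
  ext y
  simp

variable {K : Type*} [MetricSpace K] [InvolutiveNeg K] [ContinuousNeg K]
  {S : Set K} {M ε : ℝ}

/-- A bounded odd descent direction vanishing on `S`, when the derivative of `L` is large at all
points of the curve `γ` on the level `M`. -/
lemma exists_odd_descent {γ : C(K, X)} (hcont : Continuous dL) (hL : Continuous L)
    (hneg : ∀ x, dL (-x) = -dL x) (heven : ∀ x, L (-x) = L x)
    (hS : IsClosed S) (hSneg : ∀ u ∈ S, -u ∈ S) (hodd : ∀ u, γ (-u) = -γ u)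
    (hSM : ∀ u ∈ S, L (γ u) ≠ M) (hlarge : ∀ u, L (γ u) = M → ε < ‖dL (γ u)‖) :
    ∃ w : C(K, X), (∀ u, ‖w u‖ ≤ 1) ∧ (∀ u, w (-u) = -w u) ∧ (∀ u ∈ S, w u = 0) ∧
      ∀ u, L (γ u) = M → dL (γ u) (w u) < -ε := by
  let t : K → Set X := fun u =>
    {x | ‖x‖ ≤ 1 ∧ (L (γ u) = M → dL (γ u) x < -ε) ∧ (u ∈ S → x = 0)}
  obtain ⟨W, hW⟩ : ∃ W : C(K, X), ∀ u, W u ∈ t u := by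
    refine exists_continuous_forall_mem_convex_of_local_const (fun u => ?_) fun u => ?_
    · rintro x ⟨hx1, hx2, hx3⟩ y ⟨hy1, hy2, hy3⟩ a b ha hb hab
      refine ⟨?_, fun hu => ?_, fun hu => by simp [hx3 hu, hy3 hu]⟩
      · have := convex_closedBall (0 : X) 1 (mem_closedBall_zero_iff.2 hx1)
          (mem_closedBall_zero_iff.2 hy1) ha hb hab
        exact mem_closedBall_zero_iff.1 this
      · exact (convex_halfSpace_lt (dL (γ u)).toLinearMap.isLinear (-ε)) (hx2 hu) (hy2 hu) ha hb hab
    · by_cases hu : L (γ u) = M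
      · obtain ⟨x, hx1, hx2⟩ : ∃ x, ‖x‖ ≤ 1 ∧ dL (γ u) x < -ε := by
          obtain ⟨x, hx1, hx2⟩ := (dL (γ u)).exists_lt_apply_of_lt_opNorm (hlarge u hu)
          rcases lt_abs.1 (by simpa using hx2) with h | h
          · exact ⟨-x, by simpa using hx1.le, by simpa using h⟩
          · exact ⟨x, hx1.le, by linarith⟩
        refine ⟨x, ?_⟩
        have hc : Continuous fun v => dL (γ v) x := by fun_prop
        filter_upwards [hc.continuousAt.eventually_lt_const hx2,
          hS.isOpen_compl.mem_nhds fun h => hSM u h hu] with v hv1 hv2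
        exact ⟨hx1, fun _ => hv1, fun h => absurd h hv2⟩
      · refine ⟨0, ?_⟩
        have hc : Continuous fun v => L (γ v) := by fun_prop
        filter_upwards [hc.continuousAt.eventually_ne hu] with v hv
        exact ⟨by simp, fun h => absurd h hv, fun _ => rfl⟩
  refine ⟨⟨fun u => (1 / 2 : ℝ) • (W u - W (-u)), by fun_prop⟩, fun u => ?_, fun u => ?_,
    fun u hu => ?_, fun u hu => ?_⟩
  · simp only [ContinuousMap.coe_mk, norm_smul]
    have := norm_sub_le (W u) (W (-u))
    have h1 := (hW u).1
    have h2 := (hW (-u)).1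
    norm_num
    linarith
  · simp only [ContinuousMap.coe_mk, neg_neg, ← smul_neg, neg_sub]
  · simp [(hW u).2.2 hu, (hW (-u)).2.2 (hSneg u hu)]
  · have h1 := (hW u).2.1 hu
    have h2 := (hW (-u)).2.1 (by rw [hodd, heven, hu])
    rw [hodd, hneg, neg_apply] at h2
    simp only [ContinuousMap.coe_mk, map_smul, map_sub, smul_eq_mul]
    linarith

/-- If an odd curve `γ` almost minimizes `max (L ∘ γ)` among the odd curves with the same boundary
values, then `L` has an almost critical point at the maximal level on `γ`. -/
lemma exists_almost_critical [CompactSpace K] {γ : C(K, X)}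
    (hderiv : ∀ x, HasFDerivAt L (dL x) x) (hcont : Continuous dL)
    (heven : ∀ x, L (-x) = L x)
    (hS : IsClosed S) (hSneg : ∀ u ∈ S, -u ∈ S) (hodd : ∀ u, γ (-u) = -γ u)
    (hM : ∀ u, L (γ u) ≤ M) (hSM : ∀ u ∈ S, L (γ u) < M) (hε : 0 < ε)
    (hslope : ∀ η : C(K, X), (∀ u, η (-u) = -η u) → (∀ u ∈ S, η u = γ u) →
      ∃ u, M - ε * dist γ η ≤ L (η u)) :
    ∃ u, L (γ u) = M ∧ ‖dL (γ u)‖ ≤ 2 * ε := by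
  by_contra! hcon
  have hL : Continuous L := continuous_iff_continuousAt.2 fun x => (hderiv x).continuousAt
  obtain ⟨w, hw1, hwodd, hwS, hw⟩ := exists_odd_descent hcont hL (fderiv_neg_of_even hderiv heven)
    heven hS hSneg hodd (fun u hu => (hSM u hu).ne) hcon
  let t : ℕ → ℝ := fun n => 1 / ((n : ℝ) + 1)
  have ht : ∀ n, 0 < t n := fun n => by positivity
  have ht0 : Tendsto t atTop (𝓝 0) := tendsto_one_div_add_atTop_nhds_zero_nat
  have hex : ∀ n, ∃ u, M - ε * t n ≤ L (γ u + t n • w u) := by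
    intro n
    obtain ⟨u, hu⟩ := hslope (γ + t n • w) (fun u => by simp [hodd, hwodd, add_comm])
      (fun u hu => by simp [hwS u hu])
    refine ⟨u, le_trans ?_ hu⟩
    have hd : dist γ (γ + t n • w) ≤ t n := by
      refine (ContinuousMap.dist_le (ht n).le).2 fun v => ?_
      simp only [ContinuousMap.add_apply, ContinuousMap.smul_apply, dist_self_add_right, norm_smul,
        Real.norm_of_nonneg (ht n).le]
      exact mul_le_of_le_one_right (ht n).le (hw1 v)
    gcongr
  choose u hu using hex
  obtain ⟨v, φ, hφ, hv⟩ := CompactSpace.tendsto_subseq u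
  have htφ : Tendsto (fun n => t (φ n)) atTop (𝓝 0) := ht0.comp hφ.tendsto_atTop
  have hb : Tendsto (fun n => γ (u (φ n))) atTop (𝓝 (γ v)) := (γ.continuous.tendsto v).comp hv
  have hwv : Tendsto (fun n => w (u (φ n))) atTop (𝓝 (w v)) := (w.continuous.tendsto v).comp hv
  have ha : Tendsto (fun n => γ (u (φ n)) + t (φ n) • w (u (φ n))) atTop (𝓝 (γ v)) := by
    simpa using hb.add (htφ.smul hwv)
  have hvM : L (γ v) = M := by
    refine le_antisymm (hM v) ?_
    refine le_of_tendsto_of_tendsto' (f := fun n => M - ε * t (φ n)) ?_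
      ((hL.tendsto _).comp ha) (fun n => hu (φ n))
    simpa using (htφ.const_mul ε).const_sub M
  have hstrict := hasStrictFDerivAt_of_hasFDerivAt_of_continuousAt
    (Eventually.of_forall hderiv) (hcont.continuousAt (x := γ v))
  have hlittle := (hstrict.isLittleO.comp_tendsto (ha.prodMk_nhds hb)).def (half_pos hε)
  have hlow : ∀ᶠ n in atTop, -(3 / 2 * ε) ≤ dL (γ v) (w (u (φ n))) := by
    filter_upwards [hlittle] with n hn
    simp only [Function.comp_apply, add_sub_cancel_left, map_smul, smul_eq_mul, norm_smul,
      Real.norm_of_nonneg (ht (φ n)).le] at hn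
    have h1 : t (φ n) * ‖w (u (φ n))‖ ≤ t (φ n) := mul_le_of_le_one_right (ht _).le (hw1 _)
    have h2 := (abs_le.1 (Real.norm_eq_abs _ ▸ hn)).2
    have h3 := hu (φ n)
    have h4 := hM (u (φ n))
    have h5 : t (φ n) * -(3 / 2 * ε) ≤ t (φ n) * dL (γ v) (w (u (φ n))) := by nlinarith
    exact le_of_mul_le_mul_left h5 (ht _)
  have := ge_of_tendsto (((dL (γ v)).continuous.tendsto _).comp hwv) hlow
  linarith [hw v hvM]

/-- Symmetric min-max principle. -/
lemma PalaisSmale.exists_critical_of_minmax [CompactSpace K] [CompleteSpace X] (hPS : PalaisSmale L dL)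
    (hderiv : ∀ x, HasFDerivAt L (dL x) x) (hcont : Continuous dL)
    (heven : ∀ x, L (-x) = L x) (hS : IsClosed S) (hSneg : ∀ u ∈ S, -u ∈ S)
    (γ : C(K, X)) (hodd : ∀ u, γ (-u) = -γ u) {β : ℝ} (hSβ : ∀ u ∈ S, L (γ u) < β)
    (hlink : ∀ η : C(K, X), (∀ u, η (-u) = -η u) → (∀ u ∈ S, η u = γ u) → ∃ u, β ≤ L (η u)) :
    ∃ x, dL x = 0 ∧ β ≤ L x := by
  have hL : Continuous L := continuous_iff_continuousAt.2 fun x => (hderiv x).continuousAt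
  let Γ : Set C(K, X) := {η | (∀ u, η (-u) = -η u) ∧ ∀ u ∈ S, η u = γ u}
  have hΓ : IsClosed Γ := by
    simp only [Γ, Set.ofPred_and, Set.ofPred_forall]
    refine IsClosed.inter (isClosed_iInter fun u => ?_)
      (isClosed_iInter fun u => isClosed_iInter fun _ => ?_)
    · exact isClosed_eq (by fun_prop) (by fun_prop)
    · exact isClosed_eq (by fun_prop) (by fun_prop)
  have : CompleteSpace Γ := hΓ.completeSpace_coe
  let Φ : Γ → ℝ := fun η => ⨆ u, L (η.1 u)
  have hbdd : ∀ η : Γ, BddAbove (Set.range fun u => L (η.1 u)) := fun η =>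
    (isCompact_range (by fun_prop)).bddAbove
  have hle : ∀ (η : Γ) u, L (η.1 u) ≤ Φ η := fun η u => le_ciSup (hbdd η) u
  have hβ : ∀ η, β ≤ Φ η := fun η => by
    obtain ⟨u, hu⟩ := hlink η.1 η.2.1 η.2.2
    exact hu.trans (hle η u)
  obtain ⟨u₀, -⟩ := hlink γ hodd fun _ _ => rfl
  have : Nonempty K := ⟨u₀⟩
  have hmax : ∀ η : Γ, ∃ u, L (η.1 u) = Φ η := fun η => by
    obtain ⟨u, -, hu⟩ := isCompact_univ.exists_isMaxOn (Set.univ_nonempty (α := K))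
      (f := fun u => L (η.1 u)) (by fun_prop)
    exact ⟨u, le_antisymm (hle η u) (ciSup_le fun v => hu (Set.mem_univ v))⟩
  have hΦ : LowerSemicontinuous Φ := lowerSemicontinuous_ciSup hbdd fun u =>
    Continuous.lowerSemicontinuous (by fun_prop)
  let γΓ : Γ := ⟨γ, hodd, fun _ _ => rfl⟩
  have hex : ∀ n : ℕ, ∃ x, β ≤ L x ∧ L x ≤ Φ γΓ ∧ ‖dL x‖ ≤ 2 * (1 / ((n : ℝ) + 1)) := by
    intro n
    have hε : 0 < 1 / ((n : ℝ) + 1) := by positivity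
    obtain ⟨η, hη, hη'⟩ := hΦ.exists_ekeland ⟨β, by rintro _ ⟨η, rfl⟩; exact hβ η⟩ hε γΓ
    obtain ⟨u, hu, hu'⟩ := exists_almost_critical (γ := η.1) hderiv hcont heven hS hSneg η.2.1
      (hle η) (fun u hu => by rw [η.2.2 u hu]; exact (hSβ u hu).trans_le (hβ η)) hε
      (fun ζ hζ hζS => by
        let ζΓ : Γ := ⟨ζ, hζ, fun u hu => (hζS u hu).trans (η.2.2 u hu)⟩
        obtain ⟨u, hu⟩ := hmax ζΓ
        exact ⟨u, (hη' ζΓ).trans hu.ge⟩)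
    exact ⟨η.1 u, hu ▸ hβ η, hu ▸ hη, hu'⟩
  choose x hxβ hxΦ hx using hex
  have hx0 : Tendsto (fun n => ‖dL (x n)‖) atTop (𝓝 0) := by
    refine squeeze_zero (fun _ => norm_nonneg _) hx ?_
    simpa using (tendsto_one_div_add_atTop_nhds_zero_nat (𝕜 := ℝ)).const_mul 2
  obtain ⟨y, φ, hφ, hy⟩ := hPS x ⟨max |β| |Φ γΓ|, fun n => abs_le_max_abs_abs (hxβ n) (hxΦ n)⟩ hx0
  refine ⟨y, ?_, ge_of_tendsto' ((hL.tendsto y).comp hy) fun n => hxβ (φ n)⟩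
  have h1 := ((hcont.norm).tendsto y).comp hy
  exact norm_eq_zero.1 (tendsto_nhds_unique h1 (hx0.comp hφ.tendsto_atTop))

end MinMax

section Fountain

variable {X : Type*} [NormedAddCommGroup X] [NormedSpace ℝ X] [CompleteSpace X] {e : ℕ → X}
  {L : X → ℝ} {dL : X → X →L[ℝ] ℝ}

/-- One level of the fountain theorem: if `L ≤ 0` on a sphere of the span of the first `k + 1`
basis vectors and `L ≥ β > 0` on a smaller sphere of the closed span of the remaining ones from
index `k` on, then `L` has a critical point at a level at least `β`. -/
lemma PalaisSmale.exists_critical_of_basis (hPS : PalaisSmale L dL)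
    (hbasis : ∀ x : X, ∃! a : ℕ → ℝ,
      Tendsto (fun n => ∑ j ∈ Finset.range n, a j • e j) atTop (𝓝 x))
    (hderiv : ∀ x, HasFDerivAt L (dL x) x) (hcont : Continuous dL)
    (heven : ∀ x, L (-x) = L x) {k : ℕ} (hk : 1 ≤ k) {ρ r β : ℝ} (hr : 0 < r) (hrρ : r < ρ)
    (hβ : 0 < β) (hY : ∀ u ∈ Submodule.span ℝ (e '' Set.Iio (k + 1)), ‖u‖ = ρ → L u ≤ 0)
    (hZ : ∀ u ∈ (Submodule.span ℝ (e '' Set.Ici k)).topologicalClosure, ‖u‖ = r → β ≤ L u) :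
    ∃ x, dL x = 0 ∧ β ≤ L x := by
  obtain ⟨m, rfl⟩ := Nat.exists_eq_add_of_le' hk
  set Y := Submodule.span ℝ (e '' Set.Iio (m + 1 + 1))
  set Z := (Submodule.span ℝ (e '' Set.Ici (m + 1))).topologicalClosure
  have hYrank : Module.finrank ℝ Y = m + 2 :=
    finrank_span_image_Iio (linearIndependent_of_unique_expansion hbasis) _
  have : FiniteDimensional ℝ Y := .of_finrank_pos (by omega)
  have hZspan := span_mkQ_eq_top (fun x => (hbasis x).exists) (m + 1)
  have : FiniteDimensional ℝ (X ⧸ Z) := .of_fg_top (hZspan ▸ Submodule.fg_span (Set.finite_range _))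
  have hcodim : Module.finrank ℝ (X ⧸ Z) ≤ m + 1 := by
    have h := finrank_range_le_card (R := ℝ) fun j : Fin (m + 1) => Z.mkQ (e j)
    rw [Set.finrank, hZspan, finrank_top] at h
    simpa using h
  have : CompactSpace (Metric.closedBall (0 : Y) ρ) :=
    isCompact_iff_compactSpace.1 (isCompact_closedBall _ _)
  refine hPS.exists_critical_of_minmax hderiv hcont heven
    (S := {u : Metric.closedBall (0 : Y) ρ | ‖(u : Y)‖ = ρ})
    (isClosed_eq (by fun_prop) continuous_const) (fun u hu => by simpa using hu)
    ⟨fun u => ((u : Y) : X), by fun_prop⟩ (fun u => by simp)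
    (fun u hu => (hY _ u.1.2 hu).trans_lt hβ) fun η hη hηS => ?_
  obtain ⟨u, huZ, hur⟩ := exists_mem_norm_eq_of_odd hYrank
    (Submodule.isClosed_topologicalClosure _) hcodim hr (hr.trans hrρ) η hη (fun u hu => by
      rw [hηS u hu]
      exact hrρ.le.trans (le_of_eq hu.symm))
  exact ⟨u, hZ _ huZ hur⟩

end Fountain

/-- Fountain Theorem (Theorem 3.7 of the paper).  The Schauder basis `(e_j)_{j≥1}`
of the paper is encoded as `e : ℕ → X` (Lean index `j` is the paper index `j+1`),
so that the paper's `Y_k = span{e_1,…,e_k}` is `span (e '' Set.Iio k)` and the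
paper's `Z_k = cl span{e_j : j ≥ k}` is the closure of `span (e '' Set.Ici (k-1))`;
for each paper index `k ≥ 1` (Lean `k`, arbitrary in `ℕ`) the hypotheses `(L₁)`,
`(L₂)` are stated with radii `ρ k > r k > 0`. -/
theorem stmt10 {X : Type*} [NormedAddCommGroup X] [NormedSpace ℝ X] [CompleteSpace X]
    (e : ℕ → X)
    (hbasis : ∀ x : X, ∃! a : ℕ → ℝ,
      Tendsto (fun n => ∑ j ∈ Finset.range n, a j • e j) atTop (𝓝 x))
    (L : X → ℝ) (dL : X → X →L[ℝ] ℝ)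
    (hderiv : ∀ x, HasFDerivAt L (dL x) x) (hcont : Continuous dL)
    (heven : ∀ x : X, L (-x) = L x)
    (hPS : PalaisSmale L dL)
    (ρ r : ℕ → ℝ)
    (hρr : ∀ k, 0 < r k ∧ r k < ρ k)
    (hL1 : ∀ k : ℕ, ∀ u ∈ Submodule.span ℝ (e '' Set.Iio (k + 1)), ‖u‖ = ρ k → L u ≤ 0)
    (hL2 : Tendsto (fun k : ℕ => sInf (L '' {u : X |
        u ∈ (Submodule.span ℝ (e '' Set.Ici k)).topologicalClosure ∧ ‖u‖ = r k}))
      atTop atTop) :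
    ∃ u : ℕ → X, (∀ k, dL (u k) = 0) ∧ Tendsto (fun k => L (u k)) atTop atTop := by
  have hlevel : ∀ n : ℕ, ∃ x, dL x = 0 ∧ (n : ℝ) ≤ L x := by
    intro n
    obtain ⟨k, hk1, hk⟩ :=
      ((eventually_ge_atTop 1).and (hL2.eventually_ge_atTop ((n : ℝ) + 1))).exists
    have hpos : (0 : ℝ) < n + 1 := by positivity
    set b := sInf (L '' {u : X |
      u ∈ (Submodule.span ℝ (e '' Set.Ici k)).topologicalClosure ∧ ‖u‖ = r k})
    have hbdd : BddBelow (L '' {u : X |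
        u ∈ (Submodule.span ℝ (e '' Set.Ici k)).topologicalClosure ∧ ‖u‖ = r k}) := by
      by_contra h
      exact (hpos.trans_le hk).ne' (Real.sInf_of_not_bddBelow h)
    obtain ⟨x, hx, hx'⟩ := hPS.exists_critical_of_basis hbasis hderiv hcont heven hk1
      (hρr k).1 (hρr k).2 (hpos.trans_le hk) (hL1 k)
      (fun u hu hur => csInf_le hbdd ⟨u, ⟨hu, hur⟩, rfl⟩)
    exact ⟨x, hx, by linarith⟩
  choose u hu hu' using hlevel
  exact ⟨u, hu, tendsto_atTop_mono hu' tendsto_natCast_atTop_atTop⟩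
end

section
/- (Ljusternik–Schnirelman principle, behaviour of the critical levels.) Let X be a reflexive real Banach space and F, G : X → ℝ functionals satisfying: (F1) F and G are even, of class C¹, and F(0) = G(0) = 0; (F2) F′ : X → X* is strongly continuous (it maps weakly convergent sequences to norm-convergent sequences), and if ψ lies in the closed convex hull of S_G := {ψ ∈ X : G(ψ) = 1} and ⟨F′(ψ), ψ⟩ = 0, then F(ψ) = 0; (F3) G′ : X → X* is continuous and bounded (maps bounded sets to bounded sets) and satisfies condition (S₀): if ψ_n ⇀ ψ weakly in X, G′(ψ_n) ⇀ v weakly in X*, and ⟨G′(ψ_n), ψ_n⟩ → ⟨v, ψ⟩, then ψ_n → ψ in norm; (F4) S_G is bounded, for every ψ ≠ 0 one has ⟨G′(ψ), ψ⟩ > 0 and G(tψ) → +∞ as t → +∞, and inf_{ψ ∈ S_G} ⟨G′(ψ), ψ⟩ > 0. For n ≥ 1 let A_n be the class of all compact symmetric subsets K of S_G with F(ψ) > 0 on K and genus γ(K) ≥ n, and set a_n = sup_{K ∈ A_n} inf_{ψ ∈ K} F(ψ) if A_n ≠ ∅ and a_n = 0 otherwise. Then a_1 < ∞, the sequence (a_n)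 is nonincreasing and nonnegative (a_1 ≥ a_2 ≥ ⋯ ≥ 0), and a_n → 0 as n → ∞. -/
open Filter Topology

/-- The level set `S_G = {ψ : G ψ = 1}`. -/
def levelSG {X : Type*} [NormedAddCommGroup X] [NormedSpace ℝ X] (G : X → ℝ) : Set X :=
  {ψ : X | G ψ = 1}

/-- `GenusGe K n` says that the Krasnoselskii genus of `K` is at least `n`:
for no `k < n` does there exist a continuous odd map `K → ℝ^k ∖ {0}`. -/
def GenusGe {X : Type*} [NormedAddCommGroup X] [NormedSpace ℝ X]
    (K : Set X) (n : ℕ) : Prop :=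
  ∀ k : ℕ, k < n → ¬ ∃ g : X → (Fin k → ℝ),
    ContinuousOn g K ∧ (∀ x ∈ K, g (-x) = -g x) ∧ (∀ x ∈ K, g x ≠ 0)

/-- The class `A_n` of all compact symmetric subsets `K` of `S_G` on which
`F > 0` and with genus `γ(K) ≥ n`. -/
def LSFamily {X : Type*} [NormedAddCommGroup X] [NormedSpace ℝ X]
    (F G : X → ℝ) (n : ℕ) : Set (Set X) :=
  {K : Set X | K ⊆ levelSG G ∧ IsCompact K ∧ K = -K ∧ (∀ ψ ∈ K, 0 < F ψ) ∧ GenusGe K n}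

/-- The Ljusternik–Schnirelman levels `a_n = sup_{K ∈ A_n} inf_{ψ ∈ K} F ψ`
(equal to `0` when `A_n = ∅`, since `sSup ∅ = 0` in `ℝ`). -/
noncomputable def LSLevel {X : Type*} [NormedAddCommGroup X] [NormedSpace ℝ X]
    (F G : X → ℝ) (n : ℕ) : ℝ :=
  sSup ((fun K => sInf (F '' K)) '' LSFamily F G n)

/-- In a reflexive space every bounded family has a weak limit along every ultrafilter. -/
theorem exists_weak_limit_ultrafilter {X ι : Type*} [NormedAddCommGroup X] [NormedSpace ℝ X]
    (hrefl : Function.Surjective (NormedSpace.inclusionInDoubleDual ℝ X))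
    (U : Ultrafilter ι) (x : ι → X) (C : ℝ) (hx : ∀ i, ‖x i‖ ≤ C) :
    ∃ y : X, ∀ φ : X →L[ℝ] ℝ, Tendsto (fun i => φ (x i)) U (𝓝 (φ y)) := by
  have hlim : ∀ φ : X →L[ℝ] ℝ, ∃ l : ℝ, |l| ≤ C * ‖φ‖ ∧
      Tendsto (fun i => φ (x i)) U (𝓝 l) := by
    intro φ
    have hmem : ∀ i, φ (x i) ∈ Metric.closedBall (0 : ℝ) (C * ‖φ‖) := by
      intro i
      rw [mem_closedBall_zero_iff]
      calc ‖φ (x i)‖ ≤ ‖φ‖ * ‖x i‖ := φ.le_opNorm _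
        _ ≤ ‖φ‖ * C := by gcongr; exact hx i
        _ = C * ‖φ‖ := mul_comm _ _
    obtain ⟨l, hl, hle⟩ := (isCompact_closedBall (0 : ℝ) (C * ‖φ‖)).ultrafilter_le_nhds
      (U.map fun i => φ (x i)) (by
        rw [le_principal_iff]
        exact Ultrafilter.mem_map.2 (Filter.Eventually.of_forall hmem))
    exact ⟨l, by simpa using hl, hle⟩
  choose L hLbound hL using hlim
  let T : (X →L[ℝ] ℝ) →ₗ[ℝ] ℝ :=
    { toFun := L
      map_add' := fun φ φ' => tendsto_nhds_unique (hL (φ + φ')) ((hL φ).add (hL φ'))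
      map_smul' := fun c φ => tendsto_nhds_unique (hL (c • φ)) ((hL φ).const_mul c) }
  obtain ⟨y, hy⟩ := hrefl (T.mkContinuous C hLbound)
  refine ⟨y, fun φ => ?_⟩
  have : φ y = L φ := by
    rw [← NormedSpace.dual_def ℝ X y φ, hy]
    rfl
  rw [this]
  exact hL φ

/-- A finite-dimensional span is normed, up to a factor `2`, by finitely many functionals. -/
theorem exists_finset_norming {X : Type*} [NormedAddCommGroup X] [NormedSpace ℝ X]
    (s : Finset X) :
    ∃ N : Finset (X →L[ℝ] ℝ), ∀ x ∈ Submodule.span ℝ (s : Set X), x ≠ 0 →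
      ∃ φ ∈ N, ‖φ‖ ≤ 1 ∧ ‖x‖ / 2 ≤ φ x := by
  classical
  let V := Submodule.span ℝ (s : Set X)
  have : FiniteDimensional ℝ V := FiniteDimensional.span_finset ℝ s
  obtain ⟨t, ht1, ht, hcover⟩ := (isCompact_sphere (0 : V) 1).finite_cover_balls
    (e := 1 / 2) (by norm_num)
  choose f hfnorm hf using fun v : V => exists_dual_vector'' ℝ (v : X)
  refine ⟨ht.toFinset.image f, fun x hx hx0 => ?_⟩
  have hpos : 0 < ‖x‖ := norm_pos_iff.2 hx0
  have hsphere : (‖x‖⁻¹ • (⟨x, hx⟩ : V)) ∈ Metric.sphere (0 : V) 1 := by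
    rw [mem_sphere_zero_iff_norm, norm_smul, norm_inv, norm_norm]
    exact inv_mul_cancel₀ hpos.ne'
  obtain ⟨v, hv, hdist⟩ := Set.mem_iUnion₂.1 (hcover hsphere)
  refine ⟨f v, Finset.mem_image_of_mem f (ht.mem_toFinset.2 hv), hfnorm v, ?_⟩
  have hd : ‖‖x‖⁻¹ • x - (v : X)‖ < 1 / 2 := by
    rw [mem_ball_iff_norm] at hdist
    exact hdist
  have h1 : ‖f v (‖x‖⁻¹ • x - (v : X))‖ ≤ ‖‖x‖⁻¹ • x - (v : X)‖ := by
    simpa using (f v).le_of_opNorm_le (hfnorm v) (‖x‖⁻¹ • x - (v : X))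
  have hfv : f v (v : X) = ‖(v : X)‖ := by simpa using hf v
  have hv1 : ‖(v : X)‖ = 1 := mem_sphere_zero_iff_norm.1 (ht1 hv)
  rw [map_sub, map_smul, smul_eq_mul, hfv, hv1, Real.norm_eq_abs] at h1
  have h2 : 1 / 2 ≤ ‖x‖⁻¹ * f v x := by
    have := (abs_le.1 h1).1
    linarith
  rw [inv_mul_eq_div, le_div_iff₀ hpos] at h2
  linarith

/-- If bounded sets `A k` all have `0` in their weak closure, then some sequence
`x k ∈ A k` converges weakly to `0`. -/
theorem exists_weakly_null_seq {X : Type*} [NormedAddCommGroup X] [NormedSpace ℝ X]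
    (hrefl : Function.Surjective (NormedSpace.inclusionInDoubleDual ℝ X))
    (A : ℕ → Set X) (C : ℝ) (hA : ∀ k, ∀ x ∈ A k, ‖x‖ ≤ C)
    (hzero : ∀ (k : ℕ) (N : Finset (X →L[ℝ] ℝ)) (δ : ℝ), 0 < δ →
      ∃ x ∈ A k, ∀ φ ∈ N, |φ x| < δ) :
    ∃ x : ℕ → X, (∀ k, x k ∈ A k) ∧
      ∀ φ : X →L[ℝ] ℝ, Tendsto (fun k => φ (x k)) atTop (𝓝 0) := by
  classical
  choose N hN using exists_finset_norming (X := X)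
  choose p hpA hp using fun (k : ℕ) (s : Finset X) =>
    hzero k (s.powerset.biUnion N) (1 / ((k : ℝ) + 1)) (by positivity)
  obtain ⟨s, hs⟩ : ∃ s : ℕ → Finset X, ∀ k, s (k + 1) = insert (p k (s k)) (s k) :=
    ⟨fun k => Nat.rec ∅ (fun j t => insert (p j t) t) k, fun _ => rfl⟩
  have hmono : Monotone s := monotone_nat_of_le_succ fun k => by
    rw [hs]
    exact Finset.subset_insert _ _
  let x : ℕ → X := fun k => p k (s k)
  have hxA : ∀ k, x k ∈ A k := fun k => hpA k (s k)
  have hsmall : ∀ k, ∀ φ ∈ N (s k), Tendsto (fun j => φ (x j)) atTop (𝓝 0) := by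
    intro k φ hφ
    refine squeeze_zero_norm' ?_ tendsto_one_div_add_atTop_nhds_zero_nat
    filter_upwards [eventually_ge_atTop k] with j hj
    exact (hp j (s j) φ (Finset.mem_biUnion.2
      ⟨s k, Finset.mem_powerset.2 (hmono hj), hφ⟩)).le
  have hspan : ∀ y ∈ Submodule.span ℝ (Set.range x), ∃ k,
      y ∈ Submodule.span ℝ (s k : Set X) := by
    intro y hy
    induction hy using Submodule.span_induction with
    | mem y hy =>
      obtain ⟨k, rfl⟩ := hy
      refine ⟨k + 1, Submodule.subset_span ?_⟩
      rw [hs]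
      exact Finset.mem_coe.2 (Finset.mem_insert_self _ _)
    | zero => exact ⟨0, Submodule.zero_mem _⟩
    | add y z _ _ hy hz =>
      obtain ⟨k, hk⟩ := hy
      obtain ⟨l, hl⟩ := hz
      exact ⟨max k l, Submodule.add_mem _
        (Submodule.span_mono (Finset.coe_subset.2 (hmono (le_max_left k l))) hk)
        (Submodule.span_mono (Finset.coe_subset.2 (hmono (le_max_right k l))) hl)⟩
    | smul c y _ hy =>
      obtain ⟨k, hk⟩ := hy
      exact ⟨k, Submodule.smul_mem _ c hk⟩
  refine ⟨x, hxA, fun φ => (tendsto_iff_ultrafilter _ _ _).2 fun U hU => ?_⟩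
  obtain ⟨y, hy⟩ := exists_weak_limit_ultrafilter hrefl U x C fun k => hA k _ (hxA k)
  suffices y = 0 by simpa [this] using hy φ
  by_contra hy0
  have hpos : 0 < ‖y‖ := norm_pos_iff.2 hy0
  have hyspan : y ∈ closure (Submodule.span ℝ (Set.range x) : Set X) := by
    by_contra hnot
    obtain ⟨f, u, hfu, huy⟩ := geometric_hahn_banach_closed_point
      (Submodule.span ℝ (Set.range x)).convex.closure isClosed_closure hnot
    have hfx : ∀ z ∈ Submodule.span ℝ (Set.range x), f z ≤ 0 := by
      intro z hz
      by_contra! hfz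
      have := hfu (((u + 1) / f z) • z) (subset_closure (Submodule.smul_mem _ _ hz))
      rw [map_smul, smul_eq_mul, div_mul_cancel₀ _ hfz.ne'] at this
      linarith
    have hu : 0 < u := by
      simpa using hfu 0 (subset_closure (Submodule.zero_mem _))
    have : f y ≤ 0 := le_of_tendsto (hy f) (Eventually.of_forall fun k =>
      hfx _ (Submodule.subset_span ⟨k, rfl⟩))
    linarith
  obtain ⟨z, hz, hyz⟩ := Metric.mem_closure_iff.1 hyspan (‖y‖ / 8) (by positivity)
  rw [dist_eq_norm] at hyz
  have htri : ‖y‖ ≤ ‖y - z‖ + ‖z‖ := by simpa using norm_add_le (y - z) z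
  obtain ⟨k, hk⟩ := hspan z hz
  obtain ⟨f, hfN, hf1, hfz⟩ := hN (s k) z hk (norm_pos_iff.1 (by linarith))
  have hfy : f y = 0 := tendsto_nhds_unique (hy f) ((hsmall k f hfN).mono_left hU)
  have hle : ‖f (y - z)‖ ≤ ‖y - z‖ := by
    simpa using f.le_of_opNorm_le hf1 (y - z)
  rw [map_sub, hfy, zero_sub, norm_neg] at hle
  have := Real.le_norm_self (f z)
  linarith

/-- A differentiable functional whose derivative is strongly continuous is weakly sequentially
continuous along bounded sequences. -/
theorem tendsto_of_strongly_continuous_fderiv {X : Type*} [NormedAddCommGroup X]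
    [NormedSpace ℝ X] {F : X → ℝ} {F' : X → X →L[ℝ] ℝ}
    (hFderiv : ∀ ψ, HasFDerivAt F (F' ψ) ψ)
    (hFsc : ∀ (ψ : ℕ → X) (ψ₀ : X),
      (∀ φ : X →L[ℝ] ℝ, Tendsto (fun n => φ (ψ n)) atTop (𝓝 (φ ψ₀))) →
      Tendsto (fun n => F' (ψ n)) atTop (𝓝 (F' ψ₀)))
    (x : ℕ → X) (ψ : X) (C : ℝ) (hC : ∀ n, ‖x n‖ ≤ C)
    (hx : ∀ φ : X →L[ℝ] ℝ, Tendsto (fun n => φ (x n)) atTop (𝓝 0)) :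
    Tendsto (fun n => F (ψ + x n)) atTop (𝓝 (F ψ)) := by
  have hmvt : ∀ n, ∃ t ∈ Set.Ioo (0 : ℝ) 1,
      F (ψ + x n) - F ψ = F' (ψ + t • x n) (x n) := by
    intro n
    have hd : ∀ t : ℝ, HasDerivAt (fun t : ℝ => F (ψ + t • x n))
        (F' (ψ + t • x n) (x n)) t := by
      intro t
      have h1 : HasDerivAt (fun t : ℝ => ψ + t • x n) (x n) t := by
        simpa using ((hasDerivAt_id t).smul_const (x n)).const_add ψ
      exact (hFderiv _).comp_hasDerivAt t h1
    obtain ⟨t, ht, h⟩ := exists_hasDerivAt_eq_slope (fun t : ℝ => F (ψ + t • x n))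
      (fun t => F' (ψ + t • x n) (x n)) zero_lt_one
      (fun t _ => (hd t).continuousAt.continuousWithinAt) (fun t _ => hd t)
    exact ⟨t, ht, by simpa using h.symm⟩
  choose t ht hFt using hmvt
  have hweak : ∀ φ : X →L[ℝ] ℝ,
      Tendsto (fun n => φ (ψ + t n • x n)) atTop (𝓝 (φ ψ)) := by
    intro φ
    have h0 : Tendsto (fun n => t n * φ (x n)) atTop (𝓝 0) := by
      refine squeeze_zero_norm (fun n => ?_) (by simpa using (hx φ).norm)
      rw [norm_mul]
      refine mul_le_of_le_one_left (norm_nonneg _) ?_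
      rw [Real.norm_of_nonneg (ht n).1.le]
      exact (ht n).2.le
    simpa using h0.const_add (φ ψ)
  have hF' := tendsto_iff_norm_sub_tendsto_zero.1 (hFsc _ ψ hweak)
  have hrem : Tendsto (fun n => (F' (ψ + t n • x n) - F' ψ) (x n)) atTop (𝓝 0) := by
    refine squeeze_zero_norm (a := fun n => ‖F' (ψ + t n • x n) - F' ψ‖ * C) (fun n => ?_)
      (by simpa using hF'.mul_const C)
    exact (ContinuousLinearMap.le_opNorm _ _).trans
      (mul_le_mul_of_nonneg_left (hC n) (norm_nonneg _))
  have hsum := (hrem.add (hx (F' ψ))).const_add (F ψ)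
  simp only [add_zero] at hsum
  refine hsum.congr fun n => ?_
  have := hFt n
  simp only [sub_apply]
  linarith

/-- A functional with strongly continuous derivative is bounded above on bounded subsets of a
reflexive space. -/
theorem exists_upper_bound_of_strongly_continuous_fderiv {X : Type*} [NormedAddCommGroup X]
    [NormedSpace ℝ X]
    (hrefl : Function.Surjective (NormedSpace.inclusionInDoubleDual ℝ X))
    {F : X → ℝ} {F' : X → X →L[ℝ] ℝ}
    (hFderiv : ∀ ψ, HasFDerivAt F (F' ψ) ψ)
    (hFsc : ∀ (ψ : ℕ → X) (ψ₀ : X),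
      (∀ φ : X →L[ℝ] ℝ, Tendsto (fun n => φ (ψ n)) atTop (𝓝 (φ ψ₀))) →
      Tendsto (fun n => F' (ψ n)) atTop (𝓝 (F' ψ₀)))
    {S : Set X} (hS : Bornology.IsBounded S) : ∃ B : ℝ, ∀ x ∈ S, F x ≤ B := by
  by_contra! hunb
  obtain ⟨C, hC⟩ := hS.exists_norm_le
  choose y hyS hy using fun n : ℕ => hunb n
  obtain ⟨ψ, hψ⟩ := exists_weak_limit_ultrafilter hrefl (Filter.hyperfilter ℕ) y C
    fun n => hC _ (hyS n)
  have hbound : ∀ (k : ℕ), ∀ x ∈ {x | ψ + x ∈ S ∧ (k : ℝ) < F (ψ + x)}, ‖x‖ ≤ C + ‖ψ‖ := by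
    intro k x hx
    have h1 := hC _ hx.1
    have h2 : ‖x‖ ≤ ‖ψ + x‖ + ‖ψ‖ := by simpa using norm_sub_le (ψ + x) ψ
    linarith
  obtain ⟨x, hxA, hx⟩ := exists_weakly_null_seq hrefl
    (fun k : ℕ => {x | ψ + x ∈ S ∧ (k : ℝ) < F (ψ + x)}) (C + ‖ψ‖) hbound (by
      intro k N δ hδ
      have hev : ∀ᶠ n in (Filter.hyperfilter ℕ : Filter ℕ),
          ∀ φ ∈ N, |φ (y n - ψ)| < δ := by
        rw [Filter.eventually_all_finset]
        intro φ _
        filter_upwards [Metric.tendsto_nhds.1 (hψ φ) δ hδ] with n hn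
        simpa [Real.dist_eq] using hn
      have hge : ∀ᶠ n in (Filter.hyperfilter ℕ : Filter ℕ), k ≤ n :=
        (Nat.hyperfilter_le_atTop) (eventually_ge_atTop k)
      obtain ⟨n, hn, hkn⟩ := (hev.and hge).exists
      refine ⟨y n - ψ, ⟨by simpa using hyS n, ?_⟩, hn⟩
      rw [add_sub_cancel]
      exact (Nat.cast_le.2 hkn).trans_lt (hy n))
  have hlim := tendsto_of_strongly_continuous_fderiv hFderiv hFsc x ψ (C + ‖ψ‖)
    (fun k => hbound k _ (hxA k)) hx
  exact not_tendsto_nhds_of_tendsto_atTop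
    (tendsto_atTop_mono (fun k => (hxA k).2.le) tendsto_natCast_atTop_atTop) _ hlim

/-- Finitely many functionals have no common zero on the part of a bounded set where a
functional `F` with strongly continuous derivative and `F 0 = 0` is at least `ε`. -/
theorem exists_finset_separating_superlevel {X : Type*} [NormedAddCommGroup X]
    [NormedSpace ℝ X]
    (hrefl : Function.Surjective (NormedSpace.inclusionInDoubleDual ℝ X))
    {F : X → ℝ} {F' : X → X →L[ℝ] ℝ}
    (hFderiv : ∀ ψ, HasFDerivAt F (F' ψ) ψ) (hF0 : F 0 = 0)
    (hFsc : ∀ (ψ : ℕ → X) (ψ₀ : X),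
      (∀ φ : X →L[ℝ] ℝ, Tendsto (fun n => φ (ψ n)) atTop (𝓝 (φ ψ₀))) →
      Tendsto (fun n => F' (ψ n)) atTop (𝓝 (F' ψ₀)))
    {S : Set X} (hS : Bornology.IsBounded S) {ε : ℝ} (hε : 0 < ε) :
    ∃ N : Finset (X →L[ℝ] ℝ), ∀ x ∈ S, ε ≤ F x → ∃ φ ∈ N, φ x ≠ 0 := by
  by_contra! hN
  obtain ⟨C, hC⟩ := hS.exists_norm_le
  obtain ⟨x, hxA, hx⟩ := exists_weakly_null_seq hrefl (fun _ => {x | x ∈ S ∧ ε ≤ F x}) C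
    (fun _ x hx => hC x hx.1) (by
      intro _ N δ hδ
      obtain ⟨x, hxS, hxF, hx⟩ := hN N
      exact ⟨x, ⟨hxS, hxF⟩, fun φ hφ => by simpa [hx φ hφ] using hδ⟩)
  have hlim := tendsto_of_strongly_continuous_fderiv hFderiv hFsc x 0 C
    (fun k => hC _ (hxA k).1) hx
  simp only [zero_add, hF0] at hlim
  exact hε.not_ge (ge_of_tendsto' hlim fun k => (hxA k).2)

theorem GenusGe.mono {X : Type*} [NormedAddCommGroup X] [NormedSpace ℝ X] {K : Set X}
    {m n : ℕ} (hmn : m ≤ n) (h : GenusGe K n) : GenusGe K m :=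
  fun k hk => h k (hk.trans_le hmn)

theorem GenusGe.nonempty {X : Type*} [NormedAddCommGroup X] [NormedSpace ℝ X] {K : Set X}
    {n : ℕ} (hn : 1 ≤ n) (h : GenusGe K n) : K.Nonempty := by
  by_contra hK
  rw [Set.not_nonempty_iff_eq_empty] at hK
  exact h 0 hn ⟨0, by simp [hK]⟩

theorem LSFamily_anti {X : Type*} [NormedAddCommGroup X] [NormedSpace ℝ X] (F G : X → ℝ)
    {m n : ℕ} (hmn : m ≤ n) : LSFamily F G n ⊆ LSFamily F G m :=
  fun _ hK => ⟨hK.1, hK.2.1, hK.2.2.1, hK.2.2.2.1, hK.2.2.2.2.mono hmn⟩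

/-- A set of genus larger than the number of functionals in `N` contains a common zero. -/
theorem GenusGe.exists_common_zero {X : Type*} [NormedAddCommGroup X] [NormedSpace ℝ X]
    {K : Set X} {n : ℕ} (h : GenusGe K n) (N : Finset (X →L[ℝ] ℝ)) (hN : N.card < n) :
    ∃ x ∈ K, ∀ φ ∈ N, φ x = 0 := by
  by_contra! hne
  refine h N.card hN ⟨fun x i => (N.equivFin.symm i : X →L[ℝ] ℝ) x, ?_, ?_, ?_⟩
  · exact (continuous_pi fun i => ContinuousLinearMap.continuous _).continuousOn
  · intro x _
    ext i
    simp
  · intro x hx hzero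
    obtain ⟨φ, hφ, hφx⟩ := hne x hx
    exact hφx (by simpa using congrFun hzero (N.equivFin ⟨φ, hφ⟩))

theorem LSFamily.sInf_image_le {X : Type*} [NormedAddCommGroup X] [NormedSpace ℝ X]
    {F G : X → ℝ} {n : ℕ} {K : Set X} (hK : K ∈ LSFamily F G n) {x : X} (hx : x ∈ K) :
    sInf (F '' K) ≤ F x := by
  refine csInf_le ⟨0, ?_⟩ ⟨x, hx, rfl⟩
  rintro _ ⟨y, hy, rfl⟩
  exact (hK.2.2.2.1 y hy).le

theorem LSLevel_nonneg {X : Type*} [NormedAddCommGroup X] [NormedSpace ℝ X]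
    (F G : X → ℝ) (n : ℕ) : 0 ≤ LSLevel F G n := by
  refine Real.sSup_nonneg ?_
  rintro _ ⟨K, hK, rfl⟩
  refine Real.sInf_nonneg ?_
  rintro _ ⟨y, hy, rfl⟩
  exact (hK.2.2.2.1 y hy).le

/-- Ljusternik–Schnirelman principle, behaviour of the critical levels
(conclusion (3) of Theorem 2.5 of the paper): under (F1)–(F4), `a_1 < ∞`
(i.e. the defining set of `a_1` is bounded above), the sequence `(a_n)` is
nonincreasing and nonnegative, and `a_n → 0`. -/
theorem stmt15 {X : Type*} [NormedAddCommGroup X] [NormedSpace ℝ X] [CompleteSpace X]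
    (hrefl : Function.Surjective (NormedSpace.inclusionInDoubleDual ℝ X))
    (F G : X → ℝ) (F' G' : X → X →L[ℝ] ℝ)
    -- (F1)
    (hFeven : ∀ ψ : X, F (-ψ) = F ψ) (hGeven : ∀ ψ : X, G (-ψ) = G ψ)
    (hFderiv : ∀ ψ, HasFDerivAt F (F' ψ) ψ) (hFcont : Continuous F')
    (hGderiv : ∀ ψ, HasFDerivAt G (G' ψ) ψ)
    (hF0 : F 0 = 0) (hG0 : G 0 = 0)
    -- (F2): F' is strongly continuous
    (hFsc : ∀ (ψ : ℕ → X) (ψ₀ : X),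
      (∀ φ : X →L[ℝ] ℝ, Tendsto (fun n => φ (ψ n)) atTop (𝓝 (φ ψ₀))) →
      Tendsto (fun n => F' (ψ n)) atTop (𝓝 (F' ψ₀)))
    (hF2 : ∀ ψ ∈ closure (convexHull ℝ (levelSG G)), F' ψ ψ = 0 → F ψ = 0)
    -- (F3): G' is continuous, bounded and satisfies condition (S₀)
    (hGcont : Continuous G')
    (hGbdd : ∀ s : Set X, Bornology.IsBounded s →
      Bornology.IsBounded ((fun ψ => G' ψ) '' s))
    (hS0 : ∀ (ψ : ℕ → X) (ψ₀ : X) (v : X →L[ℝ] ℝ),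
      (∀ φ : X →L[ℝ] ℝ, Tendsto (fun n => φ (ψ n)) atTop (𝓝 (φ ψ₀))) →
      (∀ x : X, Tendsto (fun n => G' (ψ n) x) atTop (𝓝 (v x))) →
      Tendsto (fun n => G' (ψ n) (ψ n)) atTop (𝓝 (v ψ₀)) →
      Tendsto ψ atTop (𝓝 ψ₀))
    -- (F4)
    (hSGbdd : Bornology.IsBounded (levelSG G))
    (hGpos : ∀ ψ : X, ψ ≠ 0 → 0 < G' ψ ψ)
    (hGinfty : ∀ ψ : X, ψ ≠ 0 → Tendsto (fun t : ℝ => G (t • ψ)) atTop atTop)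
    (hGinf : ∃ δ : ℝ, 0 < δ ∧ ∀ ψ ∈ levelSG G, δ ≤ G' ψ ψ) :
    BddAbove ((fun K => sInf (F '' K)) '' LSFamily F G 1) ∧
    (∀ n : ℕ, 1 ≤ n → LSLevel F G (n + 1) ≤ LSLevel F G n) ∧
    (∀ n : ℕ, 1 ≤ n → 0 ≤ LSLevel F G n) ∧
    Tendsto (fun n => LSLevel F G n) atTop (𝓝 0) := by
  have hbdd : BddAbove ((fun K => sInf (F '' K)) '' LSFamily F G 1) := by
    obtain ⟨B, hB⟩ := exists_upper_bound_of_strongly_continuous_fderiv hrefl hFderiv hFsc hSGbdd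
    refine ⟨B, ?_⟩
    rintro _ ⟨K, hK, rfl⟩
    obtain ⟨x, hx⟩ := hK.2.2.2.2.nonempty le_rfl
    exact (LSFamily.sInf_image_le hK hx).trans (hB x (hK.1 hx))
  refine ⟨hbdd, fun n hn => ?_, fun n _ => LSLevel_nonneg F G n, ?_⟩
  · refine Real.sSup_le (fun a ha => ?_) (LSLevel_nonneg F G n)
    exact le_csSup (hbdd.mono (Set.image_mono (LSFamily_anti F G hn)))
      (Set.image_mono (LSFamily_anti F G n.le_succ) ha)
  · rw [Metric.tendsto_atTop]
    intro ε hε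
    obtain ⟨N, hN⟩ := exists_finset_separating_superlevel hrefl hFderiv hF0 hFsc hSGbdd
      (half_pos hε)
    refine ⟨N.card + 1, fun n hn => ?_⟩
    have hle : LSLevel F G n ≤ ε / 2 := by
      refine Real.sSup_le ?_ (half_pos hε).le
      rintro _ ⟨K, hK, rfl⟩
      obtain ⟨x, hxK, hx⟩ := hK.2.2.2.2.exists_common_zero N hn
      refine (LSFamily.sInf_image_le hK hxK).trans ?_
      by_contra! hlt
      obtain ⟨φ, hφ, hφx⟩ := hN x (hK.1 hxK) hlt.le
      exact hφx (hx φ hφ)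
    rw [Real.dist_0_eq_abs, abs_of_nonneg (LSLevel_nonneg F G n)]
    linarith
end
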